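/- arXiv:1904.00848 — 2 statements merged into one kernel-verified Lean document; each statement's English description precedes it below -/
import Mathlib

section
/- Let p ≥ 1, and let (λ_k)_{1≤k≤p}, (λ_{n,k})_{n≥1, 1≤k≤p}, (γ_k)_{1≤k≤p}, (γ_{n,k})_{n≥1, 1≤k≤p} be complex numbers such that λ₁,…,λ_p are pairwise distinct, γ_k ≠ 0 for all k, and for each k ∈ {1,…,p}, λ_{n,k} → λ_k and γ_{n,k} → γ_k as n → ∞. Then the rational functions z ↦ Σ_{k=1}^{p} γ_{n,k}/(λ_{n,k} − z) converge, as n → ∞, to the function z ↦ Σ_{k=1}^{p} γ_k/(λ_k − z), uniformly on every compact subset of ℂ with respect to the chordal distance d on the Riemann sphere (each function taking the value ∞ at its poles). -/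
open Filter Set Topology BigOperators

attribute [local instance] Classical.propDecidable

/-- The chordal (spherical) distance on the Riemann sphere `ℂ ∪ {∞}`,
modelled as `Option ℂ` with `none` representing the point `∞`. -/
noncomputable def chordal : Option ℂ → Option ℂ → ℝ
  | none, none => 0
  | none, some b => 1 / Real.sqrt (1 + ‖b‖ ^ 2)
  | some a, none => 1 / Real.sqrt (1 + ‖a‖ ^ 2)
  | some a, some b => ‖b - a‖ / Real.sqrt ((1 + ‖a‖ ^ 2) * (1 + ‖b‖ ^ 2))

/-!
In homogeneous coordinates the chordal distance between `[a : b]` and `[c : d]` is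
`|bc - ad| / (‖(a, b)‖ ‖(c, d)‖)` with Euclidean norms, which is continuous away from the origin of
`ℂ²`. Over the common denominator, `∑ γ_k / (λ_k - z)` is a pair of polynomials in `λ`, `γ` and `z`;
at the pole `λ_k` the numerator is `γ_k ∏_{j ≠ k} (λ_j - λ_k) ≠ 0`, so the pair never vanishes. The
chordal distance is thus jointly continuous in the parameters and in `z`, and compactness makes the
convergence uniform.
-/

/-- The point `[v.1 : v.2]` of the Riemann sphere with homogeneous coordinates `v`, identified with
the quotient `v.1 / v.2`. The pair `0`, which represents no point, is sent to `∞`. -/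
noncomputable def spherePoint (v : ℂ × ℂ) : Option ℂ :=
  if v.2 = 0 then none else some (v.1 / v.2)

theorem spherePoint_of_snd_eq_zero {v : ℂ × ℂ} (hv : v.2 = 0) : spherePoint v = none :=
  if_pos hv

theorem spherePoint_of_snd_ne_zero {v : ℂ × ℂ} (hv : v.2 ≠ 0) :
    spherePoint v = some (v.1 / v.2) :=
  if_neg hv

theorem sqrt_one_add_norm_div_sq {𝕜 : Type*} [NormedField 𝕜] {v : 𝕜 × 𝕜} (hv : v.2 ≠ 0) :
    √(1 + ‖v.1 / v.2‖ ^ 2) = ‖WithLp.toLp 2 v‖ / ‖v.2‖ := by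
  have hv' : ‖v.2‖ ≠ 0 := norm_ne_zero_iff.2 hv
  have hsum : 1 + ‖v.1 / v.2‖ ^ 2 = (‖v.1‖ ^ 2 + ‖v.2‖ ^ 2) / ‖v.2‖ ^ 2 := by
    rw [norm_div]
    field_simp
    ring
  rw [hsum, Real.sqrt_div (by positivity), Real.sqrt_sq (norm_nonneg _),
    WithLp.prod_norm_eq_of_L2, WithLp.toLp_fst, WithLp.toLp_snd]

theorem norm_toLp_of_snd_eq_zero {E F : Type*} [SeminormedAddCommGroup E]
    [SeminormedAddCommGroup F] {v : E × F} (hv : v.2 = 0) : ‖WithLp.toLp 2 v‖ = ‖v.1‖ := by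
  simp [WithLp.prod_norm_eq_of_L2, hv]

theorem chordal_self (x : Option ℂ) : chordal x x = 0 := by
  cases x <;> simp [chordal]

theorem chordal_comm (x y : Option ℂ) : chordal x y = chordal y x := by
  cases x <;> cases y <;> simp [chordal, norm_sub_rev, mul_comm]

theorem chordal_none_spherePoint (w : ℂ × ℂ) :
    chordal none (spherePoint w) = ‖w.2‖ / ‖WithLp.toLp 2 w‖ := by
  by_cases hw₂ : w.2 = 0
  · simp [spherePoint_of_snd_eq_zero hw₂, chordal, hw₂]
  · rw [spherePoint_of_snd_ne_zero hw₂, chordal, sqrt_one_add_norm_div_sq hw₂, one_div_div]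

theorem chordal_spherePoint {v w : ℂ × ℂ} (hv : v ≠ 0) (hw : w ≠ 0) :
    chordal (spherePoint v) (spherePoint w) =
      ‖v.2 * w.1 - v.1 * w.2‖ / (‖WithLp.toLp 2 v‖ * ‖WithLp.toLp 2 w‖) := by
  by_cases hv₂ : v.2 = 0
  · have hv₁ : ‖v.1‖ ≠ 0 := norm_ne_zero_iff.2 fun hv₁ => hv (Prod.ext hv₁ hv₂)
    rw [spherePoint_of_snd_eq_zero hv₂, chordal_none_spherePoint, norm_toLp_of_snd_eq_zero hv₂, hv₂,
      zero_mul, zero_sub, norm_neg, norm_mul, mul_div_mul_left _ _ hv₁]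
  by_cases hw₂ : w.2 = 0
  · have hw₁ : ‖w.1‖ ≠ 0 := norm_ne_zero_iff.2 fun hw₁ => hw (Prod.ext hw₁ hw₂)
    rw [spherePoint_of_snd_eq_zero hw₂, chordal_comm, chordal_none_spherePoint,
      norm_toLp_of_snd_eq_zero hw₂, hw₂, mul_zero, sub_zero, norm_mul, mul_div_mul_right _ _ hw₁]
  have hsub : w.1 / w.2 - v.1 / v.2 = (v.2 * w.1 - v.1 * w.2) / (v.2 * w.2) := by field_simp
  rw [spherePoint_of_snd_ne_zero hv₂, spherePoint_of_snd_ne_zero hw₂, chordal,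
    Real.sqrt_mul (by positivity), sqrt_one_add_norm_div_sq hv₂, sqrt_one_add_norm_div_sq hw₂,
    div_mul_div_comm, hsub, norm_div, norm_mul v.2, div_div_div_cancel_right₀]
  exact mul_ne_zero (norm_ne_zero_iff.2 hv₂) (norm_ne_zero_iff.2 hw₂)

theorem continuousAt_chordal_spherePoint {v w : ℂ × ℂ} (hv : v ≠ 0) (hw : w ≠ 0) :
    ContinuousAt (fun q : (ℂ × ℂ) × (ℂ × ℂ) => chordal (spherePoint q.1) (spherePoint q.2))
      (v, w) := by
  have hformula : ContinuousAt (fun q : (ℂ × ℂ) × (ℂ × ℂ) =>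
      ‖q.1.2 * q.2.1 - q.1.1 * q.2.2‖ / (‖WithLp.toLp 2 q.1‖ * ‖WithLp.toLp 2 q.2‖)) (v, w) := by
    refine ContinuousAt.div (by fun_prop) (by fun_prop) (mul_ne_zero ?_ ?_) <;>
      simpa using ‹_›
  refine hformula.congr ?_
  filter_upwards [continuousAt_fst.eventually_ne hv, continuousAt_snd.eventually_ne hw]
    with q hq₁ hq₂ using (chordal_spherePoint hq₁ hq₂).symm

theorem eventually_forall_chordal_spherePoint_lt {X Z : Type*} [TopologicalSpace X]
    [TopologicalSpace Z] {F : X × Z → ℂ × ℂ} {x₀ : X} {K : Set Z} (hK : IsCompact K)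
    (hF : ∀ z ∈ K, ContinuousAt F (x₀, z)) (hF₀ : ∀ z ∈ K, F (x₀, z) ≠ 0) {ε : ℝ} (hε : 0 < ε) :
    ∀ᶠ x in 𝓝 x₀, ∀ z ∈ K, chordal (spherePoint (F (x, z))) (spherePoint (F (x₀, z))) < ε := by
  refine hK.eventually_forall_of_forall_eventually fun z hz => ?_
  have hslice : ContinuousAt (fun q : X × Z => F (x₀, q.2)) (x₀, z) :=
    ContinuousAt.comp (f := fun q : X × Z => (x₀, q.2)) (hF z hz) (by fun_prop)
  have hlim := (continuousAt_chordal_spherePoint (hF₀ z hz) (hF₀ z hz)).tendsto.comp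
    ((hF z hz).prodMk_nhds hslice)
  exact hlim.eventually_lt_const (by simpa only [chordal_self] using hε)

section PartialFraction

variable {ι : Type*} [Fintype ι]

/-- The numerator of `∑ k, γ k / (lam k - z)` over the common denominator `∏ k, (lam k - z)`. -/
noncomputable def partialFractionNum {R : Type*} [CommRing R] (lam γ : ι → R) (z : R) : R :=
  ∑ k, γ k * ∏ j ∈ Finset.univ.erase k, (lam j - z)

/-- The common denominator of the fractions `γ k / (lam k - z)`. -/
noncomputable def partialFractionDen {R : Type*} [CommRing R] (lam : ι → R) (z : R) : R :=
  ∏ k, (lam k - z)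

/-- Homogeneous coordinates of `∑ k, γ k / (lam k - z)`, as a point of the projective line. -/
noncomputable def partialFractionCoords {R : Type*} [CommRing R] (lam γ : ι → R) (z : R) : R × R :=
  (partialFractionNum lam γ z, partialFractionDen lam z)

/-- The function `∑ k, γ k / (lam k - z)` with values in the Riemann sphere. Every `lam k` counts as
a pole, even where `γ k = 0` or where the singular terms cancel. -/
noncomputable def partialFractionSum (lam γ : ι → ℂ) (z : ℂ) : Option ℂ :=
  if ∃ k, lam k = z then none else some (∑ k, γ k / (lam k - z))

-- The decidability instance is arbitrary because `Fin p` comes with a non-classical one.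
theorem partialFractionSum_eq_ite (lam γ : ι → ℂ) (z : ℂ) [Decidable (∃ k, lam k = z)] :
    partialFractionSum lam γ z =
      if ∃ k, lam k = z then none else some (∑ k, γ k / (lam k - z)) := by
  unfold partialFractionSum
  congr

theorem partialFractionDen_eq_zero_iff {R : Type*} [CommRing R] [IsDomain R] {lam : ι → R}
    {z : R} : partialFractionDen lam z = 0 ↔ ∃ k, lam k = z := by
  simp [partialFractionDen, Finset.prod_eq_zero_iff, sub_eq_zero]

theorem partialFractionNum_apply_pole {R : Type*} [CommRing R] (lam γ : ι → R) (k : ι) :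
    partialFractionNum lam γ (lam k) = γ k * ∏ j ∈ Finset.univ.erase k, (lam j - lam k) := by
  refine Finset.sum_eq_single_of_mem k (Finset.mem_univ k) fun i _ hik => ?_
  have hk : k ∈ Finset.univ.erase i := Finset.mem_erase.2 ⟨hik.symm, Finset.mem_univ k⟩
  rw [Finset.prod_eq_zero hk (sub_self _), mul_zero]

theorem partialFractionCoords_ne_zero {R : Type*} [CommRing R] [IsDomain R] {lam γ : ι → R} {z : R}
    (hlam : ∀ j k, lam j = z → lam k = z → j = k) (hγ : ∀ k, lam k = z → γ k ≠ 0) :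
    partialFractionCoords lam γ z ≠ 0 := by
  intro h
  obtain ⟨hnum, hden⟩ := Prod.mk_eq_zero.1 h
  obtain ⟨k, rfl⟩ := partialFractionDen_eq_zero_iff.1 hden
  refine mul_ne_zero (hγ k rfl) (Finset.prod_ne_zero_iff.2 fun j hj => sub_ne_zero.2 fun hjk => ?_)
    (partialFractionNum_apply_pole lam γ k ▸ hnum)
  exact Finset.ne_of_mem_erase hj (hlam j k hjk rfl)

theorem partialFractionNum_div_partialFractionDen {F : Type*} [Field F] {lam : ι → F} (γ : ι → F)
    {z : F} (hz : ∀ k, lam k ≠ z) :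
    partialFractionNum lam γ z / partialFractionDen lam z = ∑ k, γ k / (lam k - z) := by
  rw [partialFractionNum, Finset.sum_div]
  refine Finset.sum_congr rfl fun k hk => ?_
  have hprod : ∏ j ∈ Finset.univ.erase k, (lam j - z) ≠ 0 :=
    Finset.prod_ne_zero_iff.2 fun j _ => sub_ne_zero.2 (hz j)
  rw [partialFractionDen, ← Finset.mul_prod_erase _ _ hk, mul_div_mul_right _ _ hprod]

theorem spherePoint_partialFractionCoords (lam γ : ι → ℂ) (z : ℂ) :
    spherePoint (partialFractionCoords lam γ z) = partialFractionSum lam γ z := by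
  by_cases hz : ∃ k, lam k = z
  · rw [partialFractionSum_eq_ite, if_pos hz,
      spherePoint_of_snd_eq_zero (partialFractionDen_eq_zero_iff.2 hz)]
  · rw [partialFractionSum_eq_ite, if_neg hz,
      spherePoint_of_snd_ne_zero (mt partialFractionDen_eq_zero_iff.1 hz), partialFractionCoords,
      partialFractionNum_div_partialFractionDen γ (not_exists.1 hz)]

theorem continuous_partialFractionCoords {R : Type*} [CommRing R] [TopologicalSpace R]
    [IsTopologicalRing R] :
    Continuous fun q : ((ι → R) × (ι → R)) × R => partialFractionCoords q.1.1 q.1.2 q.2 := by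
  unfold partialFractionCoords partialFractionNum partialFractionDen
  fun_prop

theorem rational_sum_uniform_convergence_general {α : Type*} {l : Filter α} {lam γ : ι → ℂ}
    {lamn γn : α → ι → ℂ} {K : Set ℂ} (hK : IsCompact K) (hdist : InjOn lam (lam ⁻¹' K))
    (hγ : ∀ k, lam k ∈ K → γ k ≠ 0) (hlamn : ∀ k, Tendsto (fun n => lamn n k) l (𝓝 (lam k)))
    (hγn : ∀ k, Tendsto (fun n => γn n k) l (𝓝 (γ k))) {ε : ℝ} (hε : 0 < ε) :
    ∀ᶠ n in l, ∀ z ∈ K,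
      chordal (partialFractionSum (lamn n) (γn n) z) (partialFractionSum lam γ z) < ε := by
  have hne : ∀ z ∈ K, partialFractionCoords lam γ z ≠ 0 := by
    intro z hz
    refine partialFractionCoords_ne_zero (fun j k hj hk => ?_) fun k hk => hγ k (hk ▸ hz)
    exact hdist (mem_preimage.2 (hj ▸ hz)) (mem_preimage.2 (hk ▸ hz)) (hj.trans hk.symm)
  have hlim : Tendsto (fun n => (lamn n, γn n)) l (𝓝 (lam, γ)) :=
    (tendsto_pi_nhds.2 hlamn).prodMk_nhds (tendsto_pi_nhds.2 hγn)
  have hunif := eventually_forall_chordal_spherePoint_lt (x₀ := (lam, γ)) hK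
    (fun _ _ => continuous_partialFractionCoords.continuousAt) hne hε
  simpa only [spherePoint_partialFractionCoords] using hlim.eventually hunif

end PartialFraction

/-- If `λ_{n,k} → λ_k` (pairwise distinct) and `γ_{n,k} → γ_k ≠ 0`, then the rational
functions `z ↦ Σ_k γ_{n,k}/(λ_{n,k} - z)` converge to `z ↦ Σ_k γ_k/(λ_k - z)`
uniformly on every compact subset of `ℂ`, for the chordal distance on the Riemann
sphere, each function taking the value `∞` at its poles. -/
theorem rational_sum_uniform_convergence
    (p : ℕ) (hp : 1 ≤ p)
    (lam : Fin p → ℂ) (γ : Fin p → ℂ)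
    (lamn : ℕ → Fin p → ℂ) (γn : ℕ → Fin p → ℂ)
    (hdist : Function.Injective lam) (hγ : ∀ k, γ k ≠ 0)
    (hlamn : ∀ k, Tendsto (fun n => lamn n k) atTop (𝓝 (lam k)))
    (hγn : ∀ k, Tendsto (fun n => γn n k) atTop (𝓝 (γ k))) :
    ∀ K : Set ℂ, IsCompact K → ∀ ε : ℝ, 0 < ε →
      ∃ N : ℕ, ∀ n ≥ N, ∀ z ∈ K,
        chordal
          (if ∃ k, lamn n k = z then none
            else some (∑ k, γn n k / (lamn n k - z)))
          (if ∃ k, lam k = z then none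
            else some (∑ k, γ k / (lam k - z))) < ε := by
  intro K hK ε hε
  simpa only [partialFractionSum_eq_ite, eventually_atTop] using
    rational_sum_uniform_convergence_general hK hdist.injOn (fun k _ => hγ k) hlamn hγn hε
end

section
/- Let (Ξ_n)_{n≥1} be simple point measures on ℝ with supports L_n, converging locally weakly to a simple point measure Ξ with support L. Fix α ∈ (0,1) and reals τ_ℓ > 0 with τ_ℓ → 0 as ℓ → ∞, such that ∫_ℝ 1(|λ| > ℓ)/|λ|^{1+α} dΞ_n(λ) ≤ τ_ℓ for all n, ℓ ≥ 1. Assume the limits h_{n,ℓ} = lim_{ℓ'→∞} ∫_ℝ 1(ℓ < |λ| < ℓ')/λ dΞ_n(λ) exist, as does the analogous limit h_ℓ for Ξ, and that for some h ∈ ℝ, lim_{ℓ→∞} lim_{n→∞} h_{n,ℓ} = h and lim_{ℓ→∞} h_ℓ = 0, the limits in ℓ being restricted to ℓ with ℓ ∉ L and −ℓ ∉ L. Let (γ_{n,k})_{k∈ℤ} be strictly positive with γ_{n,k} → γ_k > 0 as n → ∞ for each k, and suppose for some γ̄, c > 0 and some α' with 0 < (1+α)α' < 1, for all n, m ≥ 1: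 |Σ_{k=0}^{m−1} γ_{n,k} − γ̄m| ≤ c m^{α'} and |Σ_{k=−m}^{−1} γ_{n,k} − γ̄m| ≤ c m^{α'}. Let λ* ∈ ℝ∖L and let Λ (resp. Λ_n, for n large enough so that λ* ∉ L_n) be the weighted version of Ξ (resp. Ξ_n) where the k-th point after λ* (for k ≤ 0, the (1−k)-th point before λ*) has weight γ_k (resp. γ_{n,k}). Then the meromorphic functions S_n, defined by S_n(z) = lim_{ℓ→∞} ∫_{[−ℓ,ℓ]} 1/(λ−z) dΛ_n(λ) for z ∉ L_n, converge as n → ∞ to S + γ̄h, uniformly on compact subsets of ℂ with respect to the chordal distance d on the Riemann sphere, where S is the meromorphic function with S(z) = lim_{ℓ→∞} ∫_{[−ℓ,ℓ]} 1/(λ−z) dΛ(λ) for z ∉ L. -/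
open Filter Set Topology BigOperators

attribute [local instance] Classical.propDecidable

/-- Weight attached to a point `x` of `L` relative to the reference point `x0 ∉ L`:
the `k`-th point of `L` after `x0` gets weight `γ k` (`k ≥ 1`), and the `m`-th point
of `L` before `x0` gets weight `γ (1 - m)`. -/
noncomputable def weightFun (L : Set ℝ) (x0 : ℝ) (γ : ℤ → ℝ) (x : ℝ) : ℝ :=
  γ (if x0 < x then (Nat.card ↥(L ∩ Set.Ioc x0 x) : ℤ)
     else 1 - (Nat.card ↥(L ∩ Set.Ico x x0) : ℤ))

/-!
With `κ = 1 + α` and `θ = α'`, the tail bound gives `O(ℓ ^ κ)` points in `[-ℓ, ℓ]`, so the weights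
of the points in a half-line window add up to `γ̄` times their number up to `O(ℓ ^ (κ θ))`. As
`κ θ < 1`, Abel summation shows that beyond `ℓ` the weights may be replaced by `γ̄` at a cost of
`O(ℓ ^ (κ θ - 1))`, and then `1 / (λ - z)` by `1 / λ` by the tail bound, both uniformly in large
`n` and in bounded `z`. Hence `S_n`, respectively `S + γ̄ h`, is uniformly close to its part in
`[-ℓ, ℓ]` plus `γ̄ h_{n,ℓ}`, respectively `γ̄ (h_ℓ + h)`, and these two constants are close for
large `ℓ` and then large `n`. For `±ℓ ∉ L` the parts in `[-ℓ, ℓ]` are sums of finitely many simple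
fractions, in fixed number for large `n`, whose poles and residues converge. Near a pole of the
limit both sides are large, hence close to `∞` for the chordal distance even where they have
distinct poles.
-/

section AbelSummation

variable {ι : Type*} [LinearOrder ι]

theorem sum_rank_eq_sum_range {M : Type*} [AddCommMonoid M] (f : ℕ → M) (P : Finset ι) :
    ∑ x ∈ P, f (Finset.card {y ∈ P | y ≤ x}) = ∑ k ∈ Finset.range P.card, f (k + 1) := by
  induction P using Finset.induction_on_max with
  | empty => simp
  | insert m P hm ih =>
    have hmP : m ∉ P := fun h => lt_irrefl _ (hm m h)
    have hrank : ∀ x ∈ P, {y ∈ insert m P | y ≤ x} = {y ∈ P | y ≤ x} := fun x hx => by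
      rw [Finset.filter_insert, if_neg (hm x hx).not_ge]
    have hrank_max : {y ∈ insert m P | y ≤ m} = insert m P :=
      Finset.filter_true_of_mem (Finset.forall_mem_insert _ _ _ |>.2
        ⟨le_rfl, fun x hx => (hm x hx).le⟩)
    rw [Finset.sum_insert hmP, hrank_max, Finset.card_insert_of_notMem hmP,
      Finset.sum_range_succ, ← ih, add_comm]
    exact congrArg (· + _) (Finset.sum_congr rfl fun x hx => by rw [hrank x hx])

theorem sum_corank_eq_sum_range {M : Type*} [AddCommMonoid M] (f : ℕ → M) (P : Finset ι) :
    ∑ x ∈ P, f (Finset.card {y ∈ P | x ≤ y}) = ∑ k ∈ Finset.range P.card, f (k + 1) :=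
  sum_rank_eq_sum_range (ι := ιᵒᵈ) f P

variable {E : Type*} [SeminormedAddCommGroup E] [NormedSpace ℝ E] {u : ι → ℝ} {g : ι → E}
  {B Φ : ι → ℝ} {a : ι}

theorem norm_sum_smul_sub_le (hB : ∀ s, a ≤ s → 0 ≤ B s)
    (hΦ : ∀ s t, a ≤ s → s ≤ t → B s * ‖g s - g t‖ ≤ Φ s - Φ t) (P : Finset ι) :
    (∀ x ∈ P, a ≤ x) → (∀ m ∈ P, |∑ x ∈ P with x ≤ m, u x| ≤ B m) →
      ∀ b, a ≤ b → (∀ x ∈ P, x ≤ b) → ‖∑ x ∈ P, u x • (g x - g b)‖ ≤ Φ a - Φ b := by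
  induction P using Finset.induction_on_max with
  | empty =>
    intro _ _ b hb _
    simpa using (mul_nonneg (hB a le_rfl) (norm_nonneg _)).trans (hΦ a b le_rfl hb)
  | insert m P hm ih =>
    intro ha hU b _ hPb
    have hmP : m ∉ P := fun h => lt_irrefl _ (hm m h)
    have ham : a ≤ m := ha m (Finset.mem_insert_self _ _)
    have hmb : m ≤ b := hPb m (Finset.mem_insert_self _ _)
    have hPm : ‖∑ x ∈ P, u x • (g x - g m)‖ ≤ Φ a - Φ m := by
      refine ih (fun x hx => ha x (Finset.mem_insert_of_mem hx)) (fun y hy => ?_) m ham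
        fun x hx => (hm x hx).le
      simpa only [Finset.filter_insert, (hm y hy).not_ge, if_false] using
        hU y (Finset.mem_insert_of_mem hy)
    have hsum : |∑ x ∈ insert m P, u x| ≤ B m := by
      have hle : ∀ x ∈ insert m P, x ≤ m :=
        (Finset.forall_mem_insert _ _ _).2 ⟨le_rfl, fun x hx => (hm x hx).le⟩
      simpa only [Finset.filter_true_of_mem hle] using hU m (Finset.mem_insert_self _ _)
    have hdecomp : ∑ x ∈ insert m P, u x • (g x - g b)
        = ∑ x ∈ P, u x • (g x - g m) + (∑ x ∈ insert m P, u x) • (g m - g b) := by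
      rw [Finset.sum_insert hmP, Finset.sum_insert hmP, add_smul, Finset.sum_smul,
        add_left_comm, ← Finset.sum_add_distrib]
      simp only [← smul_add, sub_add_sub_cancel]
    calc ‖∑ x ∈ insert m P, u x • (g x - g b)‖
        ≤ (Φ a - Φ m) + B m * ‖g m - g b‖ := by
          rw [hdecomp]
          refine (norm_add_le _ _).trans (add_le_add hPm ?_)
          rw [norm_smul, Real.norm_eq_abs]
          gcongr
      _ ≤ Φ a - Φ b := by linarith [hΦ m b ham hmb]

theorem norm_sum_smul_le (hB : ∀ s, a ≤ s → 0 ≤ B s)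
    (hΦ : ∀ s t, a ≤ s → s ≤ t → B s * ‖g s - g t‖ ≤ Φ s - Φ t)
    (hg : ∀ t, a ≤ t → B t * ‖g t‖ ≤ Φ t) {P : Finset ι} (ha : ∀ x ∈ P, a ≤ x)
    (hU : ∀ m ∈ P, |∑ x ∈ P with x ≤ m, u x| ≤ B m) :
    ‖∑ x ∈ P, u x • g x‖ ≤ Φ a := by
  rcases P.eq_empty_or_nonempty with rfl | hP
  · simpa using (mul_nonneg (hB a le_rfl) (norm_nonneg _)).trans (hg a le_rfl)
  set b := P.max' hP
  have hab : a ≤ b := ha b (P.max'_mem hP)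
  have hPb : ∀ x ∈ P, x ≤ b := fun x hx => P.le_max' x hx
  have hsum : |∑ x ∈ P, u x| ≤ B b := by
    simpa only [Finset.filter_true_of_mem hPb] using hU b (P.max'_mem hP)
  calc ‖∑ x ∈ P, u x • g x‖
      = ‖∑ x ∈ P, u x • (g x - g b) + (∑ x ∈ P, u x) • g b‖ := by
        rw [Finset.sum_smul, ← Finset.sum_add_distrib]
        simp only [← smul_add, sub_add_cancel]
    _ ≤ (Φ a - Φ b) + B b * ‖g b‖ := by
        refine (norm_add_le _ _).trans
          (add_le_add (norm_sum_smul_sub_le hB hΦ P ha hU b hab hPb) ?_)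
        rw [norm_smul, Real.norm_eq_abs]
        gcongr
    _ ≤ Φ a := by linarith [hg b hab]

end AbelSummation

section Resolvent

theorem half_abs_le_norm_ofReal_sub {x : ℝ} {z : ℂ} (h : 2 * ‖z‖ ≤ |x|) :
    |x| / 2 ≤ ‖(x : ℂ) - z‖ := by
  have := norm_sub_norm_le (x : ℂ) z
  rw [Complex.norm_real, Real.norm_eq_abs] at this
  linarith

theorem half_le_norm_ofReal_sub {x : ℝ} {z : ℂ} (hx : 0 ≤ x) (h : 2 * ‖z‖ ≤ x) :
    x / 2 ≤ ‖(x : ℂ) - z‖ := by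
  simpa only [abs_of_nonneg hx] using half_abs_le_norm_ofReal_sub (h.trans (le_abs_self x))

theorem norm_inv_ofReal_sub_le {x : ℝ} {z : ℂ} (hx : 0 < x) (hz : 2 * ‖z‖ ≤ x) :
    ‖((x : ℂ) - z)⁻¹‖ ≤ 2 / x := by
  rw [norm_inv, ← inv_div]
  exact inv_anti₀ (by positivity) (half_le_norm_ofReal_sub hx.le hz)

theorem norm_inv_ofReal_sub_sub_inv_le {s t : ℝ} {z : ℂ} (hs : 0 < s) (hst : s ≤ t)
    (hz : 2 * ‖z‖ ≤ s) :
    ‖((s : ℂ) - z)⁻¹ - ((t : ℂ) - z)⁻¹‖ ≤ 4 * (1 / s - 1 / t) := by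
  have ht : 0 < t := hs.trans_le hst
  have hsz : s / 2 ≤ ‖(s : ℂ) - z‖ := half_le_norm_ofReal_sub hs.le hz
  have htz : t / 2 ≤ ‖(t : ℂ) - z‖ := half_le_norm_ofReal_sub ht.le (hz.trans hst)
  rw [inv_sub_inv (norm_pos_iff.1 (by linarith)) (norm_pos_iff.1 (by linarith)),
    sub_sub_sub_cancel_right, norm_div, norm_mul, ← Complex.ofReal_sub, Complex.norm_real,
    Real.norm_of_nonneg (sub_nonneg.2 hst)]
  calc (t - s) / (‖(s : ℂ) - z‖ * ‖(t : ℂ) - z‖) ≤ (t - s) / (s / 2 * (t / 2)) := by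
        gcongr
    _ = 4 * (1 / s - 1 / t) := by
        field_simp
        ring

theorem norm_inv_ofReal_sub_sub_inv_self_le {x : ℝ} {z : ℂ} (hx : x ≠ 0)
    (hz : 2 * ‖z‖ ≤ |x|) :
    ‖((x : ℂ) - z)⁻¹ - (x : ℂ)⁻¹‖ ≤ 2 * ‖z‖ * (1 / |x| ^ 2) := by
  have hx' : 0 < |x| := abs_pos.2 hx
  have hxz : |x| / 2 ≤ ‖(x : ℂ) - z‖ := half_abs_le_norm_ofReal_sub hz
  rw [inv_sub_inv (norm_pos_iff.1 (by linarith)) (Complex.ofReal_ne_zero.2 hx),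
    sub_sub_cancel, norm_div, norm_mul, Complex.norm_real, Real.norm_eq_abs]
  calc ‖z‖ / (‖(x : ℂ) - z‖ * |x|) ≤ ‖z‖ / (|x| / 2 * |x|) := by gcongr
    _ = 2 * ‖z‖ * (1 / |x| ^ 2) := by field_simp

theorem rpow_mul_inv_sub_inv_le {β s t : ℝ} (hβ0 : 0 ≤ β) (hβ : β < 1) (hs : 0 < s)
    (hst : s ≤ t) :
    s ^ β * (1 / s - 1 / t) ≤ (s ^ (β - 1) - t ^ (β - 1)) / (1 - β) := by
  have ht : 0 < t := hs.trans_le hst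
  have hbernoulli : (s / t) ^ (1 - β) ≤ 1 + (1 - β) * (s / t - 1) := by
    simpa only [add_sub_cancel] using rpow_one_add_le_one_add_mul_self (s := s / t - 1)
      (p := 1 - β) (by linarith [div_pos hs ht]) (by linarith) (by linarith)
  have hleft : s ^ β * (1 / s - 1 / t) = s ^ (β - 1) * (1 - s / t) := by
    rw [Real.rpow_sub_one hs.ne']
    field_simp
  have hright : t ^ (β - 1) = s ^ (β - 1) * (s / t) ^ (1 - β) := by
    rw [← neg_sub 1 β, Real.rpow_neg hs.le, Real.rpow_neg ht.le, Real.div_rpow hs.le ht.le]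
    have := (Real.rpow_pos_of_pos hs (1 - β)).ne'
    field_simp
  rw [le_div_iff₀ (by linarith), hleft, hright]
  have hpos := Real.rpow_nonneg hs.le (β - 1)
  nlinarith [mul_le_mul_of_nonneg_left hbernoulli hpos]

variable {P : Finset ℝ} {u : ℝ → ℝ} {ℓ D β : ℝ} {z : ℂ}

-- Abel summation against the potential `Φ s = D (4 / (1 - β) + 2) s ^ (β - 1)`.
theorem norm_sum_div_ofReal_sub_le_of_right (hβ0 : 0 ≤ β) (hβ : β < 1) (hD : 0 ≤ D)
    (hℓ : 0 < ℓ) (hz : 2 * ‖z‖ ≤ ℓ) (hP : ∀ x ∈ P, ℓ ≤ x)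
    (hU : ∀ m ∈ P, |∑ x ∈ P with x ≤ m, u x| ≤ D * m ^ β) :
    ‖∑ x ∈ P, (u x : ℂ) / ((x : ℂ) - z)‖ ≤ D * (4 / (1 - β) + 2) * ℓ ^ (β - 1) := by
  have hβ1 : 0 < 1 - β := by linarith
  have hDnonneg : ∀ s, ℓ ≤ s → 0 ≤ D * s ^ β := fun s hs =>
    mul_nonneg hD (Real.rpow_nonneg (hℓ.le.trans hs) _)
  have hstep : ∀ s t, ℓ ≤ s → s ≤ t →
      D * s ^ β * ‖((s : ℂ) - z)⁻¹ - ((t : ℂ) - z)⁻¹‖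
        ≤ D * (4 / (1 - β) + 2) * s ^ (β - 1) - D * (4 / (1 - β) + 2) * t ^ (β - 1) := by
    intro s t hs hst
    have hs0 : 0 < s := hℓ.trans_le hs
    have hdecr : t ^ (β - 1) ≤ s ^ (β - 1) :=
      Real.rpow_le_rpow_of_nonpos hs0 hst (by linarith)
    calc D * s ^ β * ‖((s : ℂ) - z)⁻¹ - ((t : ℂ) - z)⁻¹‖
        ≤ D * s ^ β * (4 * (1 / s - 1 / t)) := by
          gcongr
          exact norm_inv_ofReal_sub_sub_inv_le hs0 hst (hz.trans hs)
      _ = D * (4 * (s ^ β * (1 / s - 1 / t))) := by ring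
      _ ≤ D * (4 * ((s ^ (β - 1) - t ^ (β - 1)) / (1 - β))
            + 2 * (s ^ (β - 1) - t ^ (β - 1))) := by
          gcongr
          linarith [rpow_mul_inv_sub_inv_le hβ0 hβ hs0 hst]
      _ = _ := by ring
  have hlast : ∀ t, ℓ ≤ t →
      D * t ^ β * ‖((t : ℂ) - z)⁻¹‖ ≤ D * (4 / (1 - β) + 2) * t ^ (β - 1) := by
    intro t ht
    have ht0 : 0 < t := hℓ.trans_le ht
    calc D * t ^ β * ‖((t : ℂ) - z)⁻¹‖ ≤ D * t ^ β * (2 / t) := by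
          gcongr
          exact norm_inv_ofReal_sub_le ht0 (hz.trans ht)
      _ = D * 2 * t ^ (β - 1) := by
          rw [Real.rpow_sub_one ht0.ne']
          ring
      _ ≤ D * (4 / (1 - β) + 2) * t ^ (β - 1) := by
          gcongr
          linarith [div_nonneg zero_le_four hβ1.le]
  simpa only [Complex.real_smul, div_eq_mul_inv] using
    norm_sum_smul_le hDnonneg hstep hlast hP hU

theorem norm_sum_div_ofReal_sub_le_of_left (hβ0 : 0 ≤ β) (hβ : β < 1) (hD : 0 ≤ D)
    (hℓ : 0 < ℓ) (hz : 2 * ‖z‖ ≤ ℓ) (hP : ∀ x ∈ P, x ≤ -ℓ)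
    (hU : ∀ m ∈ P, |∑ x ∈ P with m ≤ x, u x| ≤ D * (-m) ^ β) :
    ‖∑ x ∈ P, (u x : ℂ) / ((x : ℂ) - z)‖ ≤ D * (4 / (1 - β) + 2) * ℓ ^ (β - 1) := by
  have hreflect : ∀ Q : Finset ℝ, ∀ f : ℝ → ℂ,
      ∑ x ∈ Q.map (Equiv.neg ℝ).toEmbedding, f x = ∑ x ∈ Q, f (-x) := fun Q f => by
    simp
  have h := norm_sum_div_ofReal_sub_le_of_right (P := P.map (Equiv.neg ℝ).toEmbedding)
    (u := fun x => u (-x)) (z := -z) hβ0 hβ hD hℓ (by rwa [norm_neg])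
    (fun x hx => neg_le_neg_iff.1 (hP (-x) (by simpa using hx)))
    (fun m hm => by
      simpa [Finset.sum_filter, neg_le] using hU (-m) (by simpa using hm))
  rw [← norm_neg, ← Finset.sum_neg_distrib]
  refine le_of_eq_of_le (congrArg norm ?_) h
  rw [hreflect]
  refine Finset.sum_congr rfl fun x _ => ?_
  rw [neg_neg, Complex.ofReal_neg, ← neg_sub', div_neg]

end Resolvent

/-- A set of reals meeting every bounded interval in finitely many points: the support of a
simple point measure. -/
def LocallyFiniteSet (L : Set ℝ) : Prop :=
  ∀ a b : ℝ, (L ∩ Set.Icc a b).Finite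

/-- Radii tending to infinity along which neither endpoint of `[-ℓ, ℓ]` belongs to `L`. -/
def regularRadii (L : Set ℝ) : Filter ℝ :=
  atTop ⊓ 𝓟 {ℓ : ℝ | ℓ ∉ L ∧ -ℓ ∉ L}

theorem regularRadii_le_atTop (L : Set ℝ) : regularRadii L ≤ atTop :=
  inf_le_left

theorem eventually_regularRadii_notMem (L : Set ℝ) :
    ∀ᶠ ℓ in regularRadii L, ℓ ∉ L ∧ -ℓ ∉ L :=
  Filter.Eventually.filter_mono inf_le_right (eventually_principal.2 fun _ h => h)

namespace LocallyFiniteSet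

variable {L : Set ℝ} {ℓ r x : ℝ}

theorem regularRadii_neBot (hL : LocallyFiniteSet L) : (regularRadii L).NeBot := by
  refine Filter.inf_principal_neBot_iff.2 fun U hU => ?_
  obtain ⟨a, ha⟩ := Filter.mem_atTop_sets.1 hU
  have hfin : (L ∩ Set.Icc a (a + 1) ∪ -(L ∩ Set.Icc (-(a + 1)) (-a))).Finite :=
    (hL _ _).union (hL _ _).neg
  obtain ⟨x, hx, hx'⟩ := (Set.Icc_infinite (lt_add_one a)).exists_notMem_finite hfin
  exact ⟨x, ha x hx.1, fun h => hx' (Or.inl ⟨h, hx⟩),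
    fun h => hx' (Or.inr ⟨h, neg_le_neg hx.2, neg_le_neg hx.1⟩)⟩

theorem isClosed (hL : LocallyFiniteSet L) : IsClosed L := by
  refine isClosed_of_closure_subset fun x hx => ?_
  have hsub : Set.Ioo (x - 1) (x + 1) ∩ L ⊆ L ∩ Set.Icc (x - 1) (x + 1) := fun y hy =>
    ⟨hy.2, Set.Ioo_subset_Icc_self hy.1⟩
  have hx' : x ∈ closure (Set.Ioo (x - 1) (x + 1) ∩ L) :=
    isOpen_Ioo.inter_closure ⟨⟨sub_one_lt x, lt_add_one x⟩, hx⟩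
  exact ((hL _ _).isClosed.closure_subset (closure_mono hsub hx')).1

/-- The points of a locally finite set lying in `[-r, r]`. -/
noncomputable def window (hL : LocallyFiniteSet L) (r : ℝ) : Finset ℝ :=
  (hL (-r) r).toFinset

/-- The points `x` of a locally finite set such that `ℓ < |x| ≤ r`. -/
noncomputable def annulus (hL : LocallyFiniteSet L) (ℓ r : ℝ) : Finset ℝ :=
  {x ∈ hL.window r | ℓ < |x|}

variable (hL : LocallyFiniteSet L)

theorem mem_window : x ∈ hL.window r ↔ x ∈ L ∧ |x| ≤ r := by
  simp only [window, Set.Finite.mem_toFinset, Set.mem_inter_iff, Set.mem_Icc, abs_le]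

theorem mem_annulus : x ∈ hL.annulus ℓ r ↔ x ∈ L ∧ ℓ < |x| ∧ |x| ≤ r := by
  simp only [annulus, Finset.mem_filter, mem_window, and_assoc, and_comm (a := ℓ < |x|)]

theorem sum_window_add_sum_annulus {M : Type*} [AddCommMonoid M] (hr : ℓ ≤ r) (f : ℝ → M) :
    ∑ x ∈ hL.window ℓ, f x + ∑ x ∈ hL.annulus ℓ r, f x = ∑ x ∈ hL.window r, f x := by
  have hwindow : {x ∈ hL.window r | ¬ ℓ < |x|} = hL.window ℓ := by
    ext x
    simp only [Finset.mem_filter, mem_window, not_lt]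
    exact ⟨fun h => ⟨h.1.1, h.2⟩, fun h => ⟨⟨h.1, h.2.trans hr⟩, h.2⟩⟩
  rw [add_comm, annulus, ← hwindow, Finset.sum_filter_add_sum_filter_not]

theorem sum_annulus_eq_right_add_left {M : Type*} [AddCommMonoid M] (hℓ : 0 ≤ ℓ)
    (f : ℝ → M) :
    ∑ x ∈ hL.annulus ℓ r, f x
      = ∑ x ∈ hL.window r with ℓ < x, f x + ∑ x ∈ hL.window r with x < -ℓ, f x := by
  rw [← Finset.sum_union (Finset.disjoint_filter.2 fun x _ h h' => by linarith),
    ← Finset.filter_or, annulus]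
  simp only [lt_abs, lt_neg]

theorem coe_window_filter_right (hℓ : 0 ≤ ℓ) (hx : x ≤ r) :
    (({y ∈ {y ∈ hL.window r | ℓ < y} | y ≤ x} : Finset ℝ) : Set ℝ) = L ∩ Set.Ioc ℓ x := by
  ext y
  simp only [Finset.mem_coe, Finset.mem_filter, mem_window, abs_le]
  exact ⟨fun ⟨⟨⟨hyL, _⟩, hℓy⟩, hyx⟩ => ⟨hyL, hℓy, hyx⟩,
    fun ⟨hyL, hℓy, hyx⟩ => ⟨⟨⟨hyL, by linarith, hyx.trans hx⟩, hℓy⟩, hyx⟩⟩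

theorem coe_window_filter_left (hℓ : 0 ≤ ℓ) (hx : -r ≤ x) :
    (({y ∈ {y ∈ hL.window r | y < -ℓ} | x ≤ y} : Finset ℝ) : Set ℝ) = L ∩ Set.Ico x (-ℓ) := by
  ext y
  simp only [Finset.mem_coe, Finset.mem_filter, mem_window, abs_le]
  exact ⟨fun ⟨⟨⟨hyL, _⟩, hyℓ⟩, hxy⟩ => ⟨hyL, hxy, hyℓ⟩,
    fun ⟨hyL, hxy, hyℓ⟩ => ⟨⟨⟨hyL, hx.trans hxy, by linarith⟩, hyℓ⟩, hxy⟩⟩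

theorem tsum_inter_Icc {E : Type*} [AddCommMonoid E] [TopologicalSpace E] (r : ℝ)
    (f : ℝ → E) : ∑' x : ↥(L ∩ Set.Icc (-r) r), f x = ∑ x ∈ hL.window r, f x := by
  rw [← Finset.tsum_subtype' (hL.window r) f, window, Set.Finite.coe_toFinset]

theorem tsum_annulus {E : Type*} [AddCommMonoid E] [TopologicalSpace E] (hr : r ∉ L)
    (hr' : -r ∉ L) (f : ℝ → E) :
    ∑' x : ↥{t | t ∈ L ∧ ℓ < |t| ∧ |t| < r}, f x = ∑ x ∈ hL.annulus ℓ r, f x := by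
  have hset : {t | t ∈ L ∧ ℓ < |t| ∧ |t| < r} = (hL.annulus ℓ r : Set ℝ) := by
    ext t
    simp only [Finset.mem_coe, mem_annulus, Set.mem_ofPred_eq]
    refine and_congr_right fun ht => and_congr_right fun _ =>
      ⟨le_of_lt, fun h => h.lt_of_ne fun htr => ?_⟩
    rcases eq_or_eq_neg_of_abs_eq htr with rfl | rfl
    · exact hr ht
    · exact hr' ht
  rw [← Finset.tsum_subtype' (hL.annulus ℓ r) f, hset]

/-- The number of points of a locally finite set in `[-x, x]` is at most `A x ^ κ` once
`ℓ ≤ x`. -/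
def CountingBound (hL : LocallyFiniteSet L) (A κ ℓ : ℝ) : Prop :=
  ∀ x, ℓ ≤ x → ((hL.window x).card : ℝ) ≤ A * x ^ κ

theorem CountingBound.mono {hL : LocallyFiniteSet L} {A κ : ℝ} (h : hL.CountingBound A κ ℓ)
    (hr : ℓ ≤ r) : hL.CountingBound A κ r :=
  fun x hx => h x (hr.trans hx)

theorem CountingBound.nonneg {hL : LocallyFiniteSet L} {A κ : ℝ}
    (h : hL.CountingBound A κ ℓ) (hℓ : 0 < ℓ) : 0 ≤ A :=
  nonneg_of_mul_nonneg_left ((Nat.cast_nonneg _).trans (h ℓ le_rfl)) (Real.rpow_pos_of_pos hℓ κ)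

theorem CountingBound.mul_card_rpow_le {hL : LocallyFiniteSet L} {A κ C θ : ℝ} {Q : Finset ℝ}
    (h : hL.CountingBound A κ ℓ) (hℓ : 0 < ℓ) (hC : 0 ≤ C) (hθ : 0 ≤ θ) (hx : ℓ ≤ x)
    (hQ : Q ⊆ hL.window x) : C * (Q.card : ℝ) ^ θ ≤ C * A ^ θ * x ^ (κ * θ) := by
  have hx0 : 0 ≤ x := hℓ.le.trans hx
  have hcard : (Q.card : ℝ) ≤ A * x ^ κ :=
    (Nat.cast_le.2 (Finset.card_le_card hQ)).trans (h x hx)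
  rw [mul_assoc, Real.rpow_mul hx0, ← Real.mul_rpow (h.nonneg hℓ) (Real.rpow_nonneg hx0 _)]
  gcongr

end LocallyFiniteSet

/-- The averages of `γ` over the first `m` indices after the reference point, and over the first
`m` indices before it, are `γbar` up to `C m ^ (θ - 1)`. -/
def RegularSums (γ : ℤ → ℝ) (γbar C θ : ℝ) : Prop :=
  ∀ m : ℕ, |∑ k ∈ Finset.range m, γ ((k : ℤ) + 1) - γbar * m| ≤ C * (m : ℝ) ^ θ ∧
    |∑ k ∈ Finset.range m, γ (-(k : ℤ)) - γbar * m| ≤ C * (m : ℝ) ^ θ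

section RegularSums

variable {γ : ℤ → ℝ} {γbar C θ : ℝ}

theorem abs_sum_range_succ_sub_le {u : ℕ → ℝ} {b c : ℝ} (hθ : 0 ≤ θ)
    (hu : ∀ m : ℕ, 1 ≤ m → |∑ k ∈ Finset.range m, u k - b * m| ≤ c * (m : ℝ) ^ θ) (m : ℕ) :
    |∑ k ∈ Finset.range m, u (k + 1) - b * m| ≤ (2 ^ θ + 1) * c * (m : ℝ) ^ θ := by
  have hzero : |u 0 - b| ≤ c := by
    simpa only [Finset.sum_range_one, Nat.cast_one, mul_one, Real.one_rpow] using hu 1 le_rfl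
  have hc : 0 ≤ c := (abs_nonneg _).trans hzero
  rcases Nat.eq_zero_or_pos m with rfl | hm
  · simpa using mul_nonneg (by positivity) (Real.rpow_nonneg le_rfl θ)
  have hm1 : (1 : ℝ) ≤ m := Nat.one_le_cast.2 hm
  have hpow : ((m + 1 : ℕ) : ℝ) ^ θ ≤ 2 ^ θ * (m : ℝ) ^ θ := by
    rw [← Real.mul_rpow two_pos.le (Nat.cast_nonneg _), Nat.cast_succ]
    exact Real.rpow_le_rpow (by positivity) (by linarith) hθ
  have hsum : ∑ k ∈ Finset.range m, u (k + 1) - b * m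
      = (∑ k ∈ Finset.range (m + 1), u k - b * (m + 1 : ℕ)) - (u 0 - b) := by
    rw [Finset.sum_range_succ', Nat.cast_succ]
    ring
  calc |∑ k ∈ Finset.range m, u (k + 1) - b * m|
      ≤ c * ((m + 1 : ℕ) : ℝ) ^ θ + c :=
        hsum ▸ (abs_sub _ _).trans (add_le_add (hu _ (Nat.succ_pos _)) hzero)
    _ ≤ c * (2 ^ θ * (m : ℝ) ^ θ) + c * (m : ℝ) ^ θ :=
        add_le_add (mul_le_mul_of_nonneg_left hpow hc)
          (le_mul_of_one_le_right hc (Real.one_le_rpow hm1 hθ))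
    _ = (2 ^ θ + 1) * c * (m : ℝ) ^ θ := by ring

theorem abs_sum_range_sub_le_of_succ {u : ℕ → ℝ} {b c : ℝ} (hθ : 0 ≤ θ) (hzero : |u 0 - b| ≤ c)
    (hu : ∀ m : ℕ, 1 ≤ m → |∑ k ∈ Finset.range m, u (k + 1) - b * m| ≤ c * (m : ℝ) ^ θ) (m : ℕ) :
    |∑ k ∈ Finset.range m, u k - b * m| ≤ (2 ^ θ + 1) * c * (m : ℝ) ^ θ := by
  have hc : 0 ≤ c := (abs_nonneg _).trans hzero
  have hu' : ∀ m : ℕ, |∑ k ∈ Finset.range m, u (k + 1) - b * m| ≤ c * (m : ℝ) ^ θ := by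
    intro m
    rcases Nat.eq_zero_or_pos m with rfl | hm
    · simpa using mul_nonneg hc (Real.rpow_nonneg le_rfl θ)
    · exact hu m hm
  rcases m with _ | m
  · simpa using mul_nonneg (by positivity) (Real.rpow_nonneg le_rfl θ)
  have hpow : (m : ℝ) ^ θ ≤ 2 ^ θ * ((m + 1 : ℕ) : ℝ) ^ θ :=
    (Real.rpow_le_rpow (Nat.cast_nonneg _) (Nat.cast_le.2 m.le_succ) hθ).trans
      (le_mul_of_one_le_left (by positivity) (Real.one_le_rpow one_le_two hθ))
  have hsum : ∑ k ∈ Finset.range (m + 1), u k - b * (m + 1 : ℕ)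
      = (∑ k ∈ Finset.range m, u (k + 1) - b * m) + (u 0 - b) := by
    rw [Finset.sum_range_succ', Nat.cast_succ]
    ring
  calc |∑ k ∈ Finset.range (m + 1), u k - b * (m + 1 : ℕ)|
      ≤ c * (m : ℝ) ^ θ + c := hsum ▸ (abs_add_le _ _).trans (add_le_add (hu' m) hzero)
    _ ≤ c * (2 ^ θ * ((m + 1 : ℕ) : ℝ) ^ θ) + c * ((m + 1 : ℕ) : ℝ) ^ θ :=
        add_le_add (mul_le_mul_of_nonneg_left hpow hc)
          (le_mul_of_one_le_right hc (Real.one_le_rpow (Nat.one_le_cast.2 m.succ_pos) hθ))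
    _ = (2 ^ θ + 1) * c * ((m + 1 : ℕ) : ℝ) ^ θ := by ring

namespace RegularSums

theorem nonneg (hγ : RegularSums γ γbar C θ) : 0 ≤ C := by
  simpa only [Nat.cast_one, Real.one_rpow, mul_one] using (abs_nonneg _).trans (hγ 1).1

theorem of_tendsto {ι : Type*} {l : Filter ι} [l.NeBot] {γn : ι → ℤ → ℝ}
    (hγn : ∀ n, RegularSums (γn n) γbar C θ)
    (hγ : ∀ k, Tendsto (γn · k) l (𝓝 (γ k))) : RegularSums γ γbar C θ := by
  have hlim : ∀ (e : ℕ → ℤ) (m : ℕ),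
      Tendsto (fun n => |∑ k ∈ Finset.range m, γn n (e k) - γbar * m|) l
        (𝓝 |∑ k ∈ Finset.range m, γ (e k) - γbar * m|) := fun e m =>
    ((tendsto_finsetSum _ fun k _ => hγ (e k)).sub_const _).abs
  exact fun m => ⟨le_of_tendsto' (hlim (fun k => k + 1) m) fun n => (hγn n m).1,
    le_of_tendsto' (hlim (fun k => -k) m) fun n => (hγn n m).2⟩

theorem of_sum_range {c : ℝ} (hθ : 0 ≤ θ)
    (hright : ∀ m : ℕ, 1 ≤ m → |∑ k ∈ Finset.range m, γ k - γbar * m| ≤ c * (m : ℝ) ^ θ)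
    (hleft : ∀ m : ℕ, 1 ≤ m →
      |∑ k ∈ Finset.range m, γ (-(k : ℤ) - 1) - γbar * m| ≤ c * (m : ℝ) ^ θ) :
    RegularSums γ γbar ((2 ^ θ + 1) * c) θ := by
  have hzero : |γ 0 - γbar| ≤ c := by
    simpa only [Finset.sum_range_one, Nat.cast_zero, Nat.cast_one, mul_one, Real.one_rpow]
      using hright 1 le_rfl
  have hleft' : ∀ m : ℕ, 1 ≤ m →
      |∑ k ∈ Finset.range m, γ (-((k + 1 : ℕ) : ℤ)) - γbar * m| ≤ c * (m : ℝ) ^ θ := by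
    simpa only [Nat.cast_succ, neg_add'] using hleft
  exact fun m => ⟨abs_sum_range_succ_sub_le (u := fun k => γ k) hθ hright m,
    abs_sum_range_sub_le_of_succ (u := fun k => γ (-k)) hθ hzero hleft' m⟩

end RegularSums

end RegularSums

section Fluctuation

variable {L : Set ℝ} {γ : ℤ → ℝ} {γbar C θ κ A x0 ℓ r m x : ℝ} {Q : Finset ℝ} {z : ℂ}

theorem sum_weightFun_of_coe_eq_Ioc (hQ : (Q : Set ℝ) = L ∩ Set.Ioc x0 x) :
    ∑ y ∈ Q, weightFun L x0 γ y = ∑ k ∈ Finset.range Q.card, γ ((k : ℤ) + 1) := by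
  have hrank : ∀ y ∈ Q, weightFun L x0 γ y = γ (Finset.card {t ∈ Q | t ≤ y} : ℕ) := by
    intro y hy
    obtain ⟨-, hx0y, hyx⟩ : y ∈ L ∩ Set.Ioc x0 x := hQ ▸ Finset.mem_coe.2 hy
    have hset : L ∩ Set.Ioc x0 y = ({t ∈ Q | t ≤ y} : Finset ℝ) := by
      ext t
      rw [Finset.coe_filter, Set.mem_ofPred_eq, ← Finset.mem_coe, hQ]
      exact ⟨fun h => ⟨⟨h.1, h.2.1, h.2.2.trans hyx⟩, h.2.2⟩, fun h => ⟨h.1.1, h.1.2.1, h.2⟩⟩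
    rw [weightFun, if_pos hx0y, hset, Nat.card_coe_set_eq, Set.ncard_coe_finset]
  rw [Finset.sum_congr rfl hrank, sum_rank_eq_sum_range (fun k : ℕ => γ k)]
  push_cast
  rfl

theorem sum_weightFun_of_coe_eq_Ico (hQ : (Q : Set ℝ) = L ∩ Set.Ico x x0) :
    ∑ y ∈ Q, weightFun L x0 γ y = ∑ k ∈ Finset.range Q.card, γ (-(k : ℤ)) := by
  have hcorank : ∀ y ∈ Q, weightFun L x0 γ y = γ (1 - (Finset.card {t ∈ Q | y ≤ t} : ℕ)) := by
    intro y hy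
    obtain ⟨-, hxy, hyx0⟩ : y ∈ L ∩ Set.Ico x x0 := hQ ▸ Finset.mem_coe.2 hy
    have hset : L ∩ Set.Ico y x0 = ({t ∈ Q | y ≤ t} : Finset ℝ) := by
      ext t
      rw [Finset.coe_filter, Set.mem_ofPred_eq, ← Finset.mem_coe, hQ]
      exact ⟨fun h => ⟨⟨h.1, hxy.trans h.2.1, h.2.2⟩, h.2.1⟩, fun h => ⟨h.1.1, h.2, h.1.2.2⟩⟩
    rw [weightFun, if_neg hyx0.not_gt, hset, Nat.card_coe_set_eq, Set.ncard_coe_finset]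
  rw [Finset.sum_congr rfl hcorank, sum_corank_eq_sum_range (fun k : ℕ => γ (1 - k))]
  refine Finset.sum_congr rfl fun k _ => congrArg γ ?_
  push_cast
  ring

theorem RegularSums.abs_sum_weightFun_sub_le_of_Ioc (hγ : RegularSums γ γbar C θ)
    (hQ : (Q : Set ℝ) = L ∩ Set.Ioc x0 x) :
    |∑ y ∈ Q, (weightFun L x0 γ y - γbar)| ≤ C * (Q.card : ℝ) ^ θ := by
  rw [Finset.sum_sub_distrib, sum_weightFun_of_coe_eq_Ioc hQ, Finset.sum_const, nsmul_eq_mul,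
    mul_comm _ γbar]
  exact (hγ _).1

theorem RegularSums.abs_sum_weightFun_sub_le_of_Ico (hγ : RegularSums γ γbar C θ)
    (hQ : (Q : Set ℝ) = L ∩ Set.Ico x x0) :
    |∑ y ∈ Q, (weightFun L x0 γ y - γbar)| ≤ C * (Q.card : ℝ) ^ θ := by
  rw [Finset.sum_sub_distrib, sum_weightFun_of_coe_eq_Ico hQ, Finset.sum_const, nsmul_eq_mul,
    mul_comm _ γbar]
  exact (hγ _).2

variable {hL : LocallyFiniteSet L}

theorem LocallyFiniteSet.CountingBound.abs_sum_le_of_union {Q₀ : Finset ℝ} {u : ℝ → ℝ}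
    (hN : hL.CountingBound A κ ℓ) (hℓ : 0 < ℓ) (hC : 0 ≤ C) (hθ : 0 ≤ θ) (hm : ℓ ≤ m)
    (hdisj : Disjoint Q₀ Q) (hwindow : Q₀ ∪ Q ⊆ hL.window m)
    (hQ₀ : |∑ y ∈ Q₀, u y| ≤ C * (Q₀.card : ℝ) ^ θ)
    (hunion : |∑ y ∈ Q₀ ∪ Q, u y| ≤ C * ((Q₀ ∪ Q).card : ℝ) ^ θ) :
    |∑ y ∈ Q, u y| ≤ 2 * (C * A ^ θ) * m ^ (κ * θ) := by
  have hsum : ∑ y ∈ Q, u y = ∑ y ∈ Q₀ ∪ Q, u y - ∑ y ∈ Q₀, u y := by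
    rw [Finset.sum_union hdisj, add_sub_cancel_left]
  calc |∑ y ∈ Q, u y| ≤ |∑ y ∈ Q₀ ∪ Q, u y| + |∑ y ∈ Q₀, u y| := hsum ▸ abs_sub _ _
    _ ≤ C * A ^ θ * m ^ (κ * θ) + C * A ^ θ * m ^ (κ * θ) :=
        add_le_add (hunion.trans (hN.mul_card_rpow_le hℓ hC hθ hm hwindow))
          (hQ₀.trans (hN.mul_card_rpow_le hℓ hC hθ hm (Finset.union_subset_left hwindow)))
    _ = 2 * (C * A ^ θ) * m ^ (κ * θ) := by ring

theorem RegularSums.abs_sum_weightFun_sub_le_right (hγ : RegularSums γ γbar C θ)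
    (hN : hL.CountingBound A κ ℓ) (hθ : 0 ≤ θ) (hℓ : 0 < ℓ) (hx0 : |x0| ≤ ℓ)
    (hm : ℓ ≤ m) (hQ : (Q : Set ℝ) = L ∩ Set.Ioc ℓ m) :
    |∑ y ∈ Q, (weightFun L x0 γ y - γbar)| ≤ 2 * (C * A ^ θ) * m ^ (κ * θ) := by
  obtain ⟨hx0ℓ', hx0ℓ⟩ := abs_le.1 hx0
  obtain ⟨Q₀, hQ₀⟩ := ((hL x0 ℓ).subset
    (Set.inter_subset_inter_right L Set.Ioc_subset_Icc_self)).exists_finset_coe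
  have hunion : ((Q₀ ∪ Q : Finset ℝ) : Set ℝ) = L ∩ Set.Ioc x0 m := by
    rw [Finset.coe_union, hQ₀, hQ, ← Set.inter_union_distrib_left,
      Set.Ioc_union_Ioc_eq_Ioc hx0ℓ hm]
  have hdisj : Disjoint Q₀ Q := by
    rw [← Finset.disjoint_coe, hQ₀, hQ]
    exact (Set.Ioc_disjoint_Ioc_of_le le_rfl).mono Set.inter_subset_right Set.inter_subset_right
  refine hN.abs_sum_le_of_union hℓ hγ.nonneg hθ hm hdisj (fun y hy => ?_)
    (hγ.abs_sum_weightFun_sub_le_of_Ioc hQ₀) (hγ.abs_sum_weightFun_sub_le_of_Ioc hunion)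
  rw [← Finset.mem_coe, hunion] at hy
  exact hL.mem_window.2 ⟨hy.1, abs_le.2 ⟨by linarith [hy.2.1], hy.2.2⟩⟩

theorem RegularSums.abs_sum_weightFun_sub_le_left (hγ : RegularSums γ γbar C θ)
    (hN : hL.CountingBound A κ ℓ) (hθ : 0 ≤ θ) (hℓ : 0 < ℓ) (hx0 : |x0| ≤ ℓ)
    (hm : ℓ ≤ m) (hQ : (Q : Set ℝ) = L ∩ Set.Ico (-m) (-ℓ)) :
    |∑ y ∈ Q, (weightFun L x0 γ y - γbar)| ≤ 2 * (C * A ^ θ) * m ^ (κ * θ) := by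
  obtain ⟨hx0ℓ', hx0ℓ⟩ := abs_le.1 hx0
  obtain ⟨Q₀, hQ₀⟩ := ((hL (-ℓ) x0).subset
    (Set.inter_subset_inter_right L Set.Ico_subset_Icc_self)).exists_finset_coe
  have hunion : ((Q₀ ∪ Q : Finset ℝ) : Set ℝ) = L ∩ Set.Ico (-m) x0 := by
    rw [Finset.coe_union, hQ₀, hQ, ← Set.inter_union_distrib_left, Set.union_comm,
      Set.Ico_union_Ico_eq_Ico (neg_le_neg hm) hx0ℓ']
  have hdisj : Disjoint Q₀ Q := by
    rw [← Finset.disjoint_coe, hQ₀, hQ, disjoint_comm]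
    exact Set.Ico_disjoint_Ico_same.mono Set.inter_subset_right Set.inter_subset_right
  refine hN.abs_sum_le_of_union hℓ hγ.nonneg hθ hm hdisj (fun y hy => ?_)
    (hγ.abs_sum_weightFun_sub_le_of_Ico hQ₀) (hγ.abs_sum_weightFun_sub_le_of_Ico hunion)
  rw [← Finset.mem_coe, hunion] at hy
  exact hL.mem_window.2 ⟨hy.1, abs_le.2 ⟨hy.2.1, by linarith [hy.2.2]⟩⟩

theorem RegularSums.norm_sum_annulus_sub_div_le (hγ : RegularSums γ γbar C θ)
    (hN : hL.CountingBound A κ ℓ) (hκ : 0 ≤ κ) (hθ : 0 ≤ θ) (hκθ : κ * θ < 1) (hℓ : 0 < ℓ)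
    (hx0 : |x0| ≤ ℓ) (hz : 2 * ‖z‖ ≤ ℓ) :
    ‖∑ x ∈ hL.annulus ℓ r, ((weightFun L x0 γ x - γbar : ℝ) : ℂ) / ((x : ℂ) - z)‖
      ≤ 2 * (2 * (C * A ^ θ) * (4 / (1 - κ * θ) + 2) * ℓ ^ (κ * θ - 1)) := by
  have hκθ0 : 0 ≤ κ * θ := mul_nonneg hκ hθ
  have hD : 0 ≤ 2 * (C * A ^ θ) := by
    have := hγ.nonneg
    have := hN.nonneg hℓ
    positivity
  have hright : ‖∑ x ∈ hL.window r with ℓ < x,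
        ((weightFun L x0 γ x - γbar : ℝ) : ℂ) / ((x : ℂ) - z)‖
      ≤ 2 * (C * A ^ θ) * (4 / (1 - κ * θ) + 2) * ℓ ^ (κ * θ - 1) := by
    refine norm_sum_div_ofReal_sub_le_of_right hκθ0 hκθ hD hℓ hz
      (fun x hx => (Finset.mem_filter.1 hx).2.le) fun m hm => ?_
    obtain ⟨hmr, hℓm⟩ := Finset.mem_filter.1 hm
    exact hγ.abs_sum_weightFun_sub_le_right hN hθ hℓ hx0 hℓm.le
      (hL.coe_window_filter_right hℓ.le ((le_abs_self m).trans (hL.mem_window.1 hmr).2))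
  have hleft : ‖∑ x ∈ hL.window r with x < -ℓ,
        ((weightFun L x0 γ x - γbar : ℝ) : ℂ) / ((x : ℂ) - z)‖
      ≤ 2 * (C * A ^ θ) * (4 / (1 - κ * θ) + 2) * ℓ ^ (κ * θ - 1) := by
    refine norm_sum_div_ofReal_sub_le_of_left hκθ0 hκθ hD hℓ hz
      (fun x hx => (Finset.mem_filter.1 hx).2.le) fun m hm => ?_
    obtain ⟨hmr, hmℓ⟩ := Finset.mem_filter.1 hm
    refine hγ.abs_sum_weightFun_sub_le_left hN hθ hℓ hx0 (le_neg.1 hmℓ.le) ?_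
    rw [hL.coe_window_filter_left hℓ.le (abs_le.1 (hL.mem_window.1 hmr).2).1, neg_neg]
  rw [hL.sum_annulus_eq_right_add_left hℓ.le, two_mul]
  exact (norm_add_le _ _).trans (add_le_add hright hleft)

end Fluctuation

/-- The sum of simple fractions with poles `p k` and residues `-v k`, with the convention
`v / 0 = 0` at the poles. -/
noncomputable def simpleFractions {κ : Type*} (P : Finset κ) (p v : κ → ℂ) (z : ℂ) : ℂ :=
  ∑ k ∈ P, v k / (p k - z)

/-- The point of the Riemann sphere which is `∞` if `z` is one of the poles `p k`, `k ∈ s`, and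
`w` otherwise. -/
noncomputable def sphereValue {κ : Type*} (p : κ → ℂ) (s : Set κ) (z w : ℂ) : Option ℂ :=
  if ∃ k ∈ s, z = p k then none else some w

section RiemannSphere

theorem simpleFractions_image {κ κ' : Type*} {P : Finset κ} {f : κ → κ'} (hf : Set.InjOn f P)
    (p v : κ' → ℂ) (z : ℂ) :
    simpleFractions (P.image f) p v z = simpleFractions P (p ∘ f) (v ∘ f) z :=
  Finset.sum_image hf

theorem sphereValue_eq_some_iff {κ : Type*} {p : κ → ℂ} {s : Set κ} {z w a : ℂ} :
    sphereValue p s z w = some a ↔ (∀ k ∈ s, z ≠ p k) ∧ w = a := by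
  simp only [sphereValue, Option.ite_none_left_eq_some, Option.some_inj, not_exists, not_and, ne_eq]

theorem sphereValue_congr {κ κ' : Type*} {p : κ → ℂ} {p' : κ' → ℂ} {s : Set κ} {s' : Set κ'}
    {z : ℂ} (h : (∀ k ∈ s, z ≠ p k) ↔ ∀ k ∈ s', z ≠ p' k) (w : ℂ) :
    sphereValue p s z w = sphereValue p' s' z w := by
  ext a
  rw [sphereValue_eq_some_iff, sphereValue_eq_some_iff, h]

theorem chordal_some_some_le (a b : ℂ) : chordal (some a) (some b) ≤ ‖b - a‖ :=
  div_le_self (norm_nonneg _) (Real.one_le_sqrt.2 (one_le_mul_of_one_le_of_one_le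
    (le_add_of_nonneg_right (sq_nonneg _)) (le_add_of_nonneg_right (sq_nonneg _))))

theorem one_div_sqrt_one_add_norm_sq_le {a : ℂ} {M : ℝ} (hM : 0 < M) (ha : M ≤ ‖a‖) :
    1 / Real.sqrt (1 + ‖a‖ ^ 2) ≤ 1 / M :=
  one_div_le_one_div_of_le hM (Real.le_sqrt_of_sq_le (by nlinarith))

theorem chordal_le_of_le_norm {a b : Option ℂ} {M : ℝ} (hM : 0 < M)
    (ha : ∀ w, a = some w → M ≤ ‖w‖) (hb : ∀ w, b = some w → M ≤ ‖w‖) :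
    chordal a b ≤ 2 / M := by
  have htwo : 1 / M + 1 / M = 2 / M := by ring
  have hpos : 0 < 1 / M := one_div_pos.2 hM
  match a, b, ha, hb with
  | none, none, _, _ =>
    simp only [chordal]
    linarith
  | none, some b, _, hb =>
    simp only [chordal]
    linarith [one_div_sqrt_one_add_norm_sq_le hM (hb b rfl)]
  | some a, none, ha, _ =>
    simp only [chordal]
    linarith [one_div_sqrt_one_add_norm_sq_le hM (ha a rfl)]
  | some a, some b, ha, hb =>
    have ha0 : 0 < ‖a‖ := hM.trans_le (ha a rfl)
    have hb0 : 0 < ‖b‖ := hM.trans_le (hb b rfl)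
    have hsqrt : ‖a‖ * ‖b‖ ≤ Real.sqrt ((1 + ‖a‖ ^ 2) * (1 + ‖b‖ ^ 2)) :=
      Real.le_sqrt_of_sq_le (by nlinarith)
    simp only [chordal]
    calc ‖b - a‖ / Real.sqrt ((1 + ‖a‖ ^ 2) * (1 + ‖b‖ ^ 2))
        ≤ (‖b‖ + ‖a‖) / (‖a‖ * ‖b‖) :=
          div_le_div₀ (by positivity) (norm_sub_le _ _) (by positivity) hsqrt
      _ = 1 / ‖a‖ + 1 / ‖b‖ := by field_simp
      _ ≤ 1 / M + 1 / M := add_le_add (one_div_le_one_div_of_le hM (ha a rfl))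
          (one_div_le_one_div_of_le hM (hb b rfl))
      _ = 2 / M := htwo

end RiemannSphere

section SimpleFractions

variable {ζ κ : Type*} {l : Filter ζ} {P : Finset κ} {p v : ζ → κ → ℂ} {p₀ v₀ : κ → ℂ}
  {z : ζ → ℂ} {z₀ m : ℂ} {b : κ} {δ ε : ℝ} {K : Set ℂ}

theorem eventually_forall_mem_of_isCompact {X : Type*} [TopologicalSpace X] {K : Set X}
    (hK : IsCompact K) {Q : ζ → X → Prop} (h : ∀ x ∈ K, ∀ᶠ q in l ×ˢ 𝓝 x, Q q.1 q.2) :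
    ∀ᶠ n in l, ∀ x ∈ K, Q n x :=
  eventually_prod_principal_iff.1 (Filter.Eventually.filter_mono
    (Filter.prod_mono le_rfl principal_le_nhdsSet) (hK.mem_prod_nhdsSet_of_forall h))

theorem tendsto_simpleFractions (hp : ∀ k ∈ P, Tendsto (p · k) l (𝓝 (p₀ k)))
    (hv : ∀ k ∈ P, Tendsto (v · k) l (𝓝 (v₀ k))) (hz : Tendsto z l (𝓝 z₀))
    (hz₀ : ∀ k ∈ P, z₀ ≠ p₀ k) :
    Tendsto (fun q => simpleFractions P (p q) (v q) (z q)) l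
      (𝓝 (simpleFractions P p₀ v₀ z₀)) :=
  tendsto_finsetSum P fun k hk =>
    (hv k hk).div ((hp k hk).sub hz) (sub_ne_zero.2 (hz₀ k hk).symm)

theorem tendsto_norm_simpleFractions_atTop (hinj : Set.InjOn p₀ P)
    (hp : ∀ k ∈ P, Tendsto (p · k) l (𝓝 (p₀ k)))
    (hv : ∀ k ∈ P, Tendsto (v · k) l (𝓝 (v₀ k))) (hb : b ∈ P) (hvb : v₀ b ≠ 0)
    (hz : Tendsto z l (𝓝 (p₀ b))) (hne : ∀ᶠ q in l, z q ≠ p q b) :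
    Tendsto (fun q => ‖simpleFractions P (p q) (v q) (z q)‖) l atTop := by
  have hrest := tendsto_simpleFractions (P := P.erase b)
    (fun k hk => hp k (Finset.mem_of_mem_erase hk))
    (fun k hk => hv k (Finset.mem_of_mem_erase hk)) hz fun k hk h =>
      Finset.ne_of_mem_erase hk (hinj (Finset.mem_of_mem_erase hk) hb h.symm)
  have hsub : Tendsto (fun q => p q b - z q) l (𝓝[≠] 0) := by
    refine tendsto_nhdsWithin_iff.2 ⟨?_, hne.mono fun q hq => sub_ne_zero.2 hq.symm⟩
    simpa only [sub_self] using (hp b hb).sub hz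
  have hpole : Tendsto (fun q => ‖v q b / (p q b - z q)‖) l atTop := by
    simp only [div_eq_mul_inv, norm_mul]
    exact (hv b hb).norm.pos_mul_atTop (norm_pos_iff.2 hvb)
      (tendsto_norm_inv_nhdsNE_zero_atTop.comp hsub)
  refine tendsto_atTop_mono (fun q => ?_) (hpole.atTop_add hrest.norm.neg)
  rw [simpleFractions, simpleFractions, ← Finset.add_sum_erase P _ hb]
  linarith [norm_le_add_norm_add (v q b / (p q b - z q))
    (∑ k ∈ P.erase b, v q k / (p q k - z q))]

theorem eventually_le_norm_of_pole (hinj : Set.InjOn p₀ P)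
    (hp : ∀ k ∈ P, Tendsto (p · k) l (𝓝 (p₀ k)))
    (hv : ∀ k ∈ P, Tendsto (v · k) l (𝓝 (v₀ k))) (hb : b ∈ P) (hvb : v₀ b ≠ 0)
    (hz : Tendsto z l (𝓝 (p₀ b))) (m : ℂ) (δ M : ℝ) :
    ∀ᶠ q in l, ∀ w,
      ((∀ k ∈ P, z q ≠ p q k) → ‖w - simpleFractions P (p q) (v q) (z q) - m‖ ≤ δ) →
      ∀ a, sphereValue (p q) P (z q) w = some a → M ≤ ‖a‖ := by
  have hbig := tendsto_norm_simpleFractions_atTop (l := l ⊓ 𝓟 {q | z q ≠ p q b}) hinj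
    (fun k hk => (hp k hk).mono_left inf_le_left) (fun k hk => (hv k hk).mono_left inf_le_left)
    hb hvb (hz.mono_left inf_le_left)
    (Filter.Eventually.filter_mono inf_le_right (eventually_principal.2 fun _ h => h))
  filter_upwards [eventually_inf_principal.1 (hbig.eventually_ge_atTop (M + ‖m‖ + δ))]
    with q hq w hw a ha
  obtain ⟨hne, rfl⟩ := sphereValue_eq_some_iff.1 ha
  set R := simpleFractions P (p q) (v q) (z q)
  have htriangle : ‖R‖ ≤ ‖w‖ + ‖w - R - m‖ + ‖m‖ :=
    calc ‖R‖ = ‖w - (w - R - m) - m‖ := congrArg _ (by ring)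
      _ ≤ ‖w‖ + ‖w - R - m‖ + ‖m‖ :=
        (norm_sub_le _ _).trans (add_le_add_left (norm_sub_le _ _) _)
  linarith [hq (hne b hb), hw hne]

theorem eventually_chordal_lt_of_pole (hinj : Set.InjOn p₀ P)
    (hp : ∀ k ∈ P, Tendsto (p · k) l (𝓝 (p₀ k)))
    (hv : ∀ k ∈ P, Tendsto (v · k) l (𝓝 (v₀ k))) (hb : b ∈ P) (hvb : v₀ b ≠ 0)
    (hz : Tendsto z l (𝓝 (p₀ b))) (m : ℂ) (δ : ℝ) (hε : 0 < ε) :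
    ∀ᶠ q in l, ∀ w w₀,
      ((∀ k ∈ P, z q ≠ p q k) → ‖w - simpleFractions P (p q) (v q) (z q) - m‖ ≤ δ) →
      ((∀ k ∈ P, z q ≠ p₀ k) → ‖w₀ - simpleFractions P p₀ v₀ (z q) - m‖ ≤ δ) →
      chordal (sphereValue (p q) P (z q) w) (sphereValue p₀ P (z q) w₀) < ε := by
  filter_upwards [eventually_le_norm_of_pole hinj hp hv hb hvb hz m δ (4 / ε),
    eventually_le_norm_of_pole (p := fun _ => p₀) (v := fun _ => v₀) hinj
      (fun _ _ => tendsto_const_nhds) (fun _ _ => tendsto_const_nhds) hb hvb hz m δ (4 / ε)]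
    with q hq hq₀ w w₀ hw hw₀
  refine (chordal_le_of_le_norm (by positivity) (hq w hw) (hq₀ w₀ hw₀)).trans_lt ?_
  rw [div_div_eq_mul_div]
  linarith

theorem eventually_chordal_lt_of_not_pole (hp : ∀ k ∈ P, Tendsto (p · k) l (𝓝 (p₀ k)))
    (hv : ∀ k ∈ P, Tendsto (v · k) l (𝓝 (v₀ k))) (hz : Tendsto z l (𝓝 z₀))
    (hz₀ : ∀ k ∈ P, z₀ ≠ p₀ k) (m : ℂ) (hδ : 2 * δ < ε) :
    ∀ᶠ q in l, ∀ w w₀,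
      ((∀ k ∈ P, z q ≠ p q k) → ‖w - simpleFractions P (p q) (v q) (z q) - m‖ ≤ δ) →
      ((∀ k ∈ P, z q ≠ p₀ k) → ‖w₀ - simpleFractions P p₀ v₀ (z q) - m‖ ≤ δ) →
      chordal (sphereValue (p q) P (z q) w) (sphereValue p₀ P (z q) w₀) < ε := by
  have hne : ∀ p : ζ → κ → ℂ, (∀ k ∈ P, Tendsto (p · k) l (𝓝 (p₀ k))) →
      ∀ᶠ q in l, ∀ k ∈ P, z q ≠ p q k := fun p hp =>
    (Filter.eventually_all_finset P).2 fun k hk =>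
      ((hz.sub (hp k hk)).eventually_ne (sub_ne_zero.2 (hz₀ k hk))).mono fun _ => sub_ne_zero.1
  have hdiff := ((tendsto_simpleFractions (p := fun _ => p₀) (v := fun _ => v₀)
    (fun _ _ => tendsto_const_nhds) (fun _ _ => tendsto_const_nhds) hz hz₀).sub
      (tendsto_simpleFractions hp hv hz hz₀)).norm
  rw [sub_self, norm_zero] at hdiff
  filter_upwards [hdiff.eventually_lt_const (sub_pos.2 hδ), hne p hp,
    hne (fun _ => p₀) fun _ _ => tendsto_const_nhds] with q hq hqp hqp₀ w w₀ hw hw₀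
  rw [sphereValue_eq_some_iff.2 ⟨hqp, rfl⟩, sphereValue_eq_some_iff.2 ⟨hqp₀, rfl⟩]
  refine (chordal_some_some_le w w₀).trans_lt ?_
  set R := simpleFractions P (p q) (v q) (z q)
  set R₀ := simpleFractions P p₀ v₀ (z q)
  calc ‖w₀ - w‖ = ‖(w₀ - R₀ - m) - (w - R - m) + (R₀ - R)‖ := congrArg _ (by ring)
    _ ≤ ‖w₀ - R₀ - m‖ + ‖w - R - m‖ + ‖R₀ - R‖ :=
      (norm_add_le _ _).trans (add_le_add_left (norm_sub_le _ _) _)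
    _ < ε := by linarith [hw hqp, hw₀ hqp₀]

theorem eventually_forall_mem_chordal_lt (hinj : Set.InjOn p₀ P)
    (hp : ∀ k ∈ P, Tendsto (p · k) l (𝓝 (p₀ k)))
    (hv : ∀ k ∈ P, Tendsto (v · k) l (𝓝 (v₀ k))) (hv₀ : ∀ k ∈ P, v₀ k ≠ 0) (hK : IsCompact K)
    (m : ℂ) (hε : 0 < ε) (hδ : 2 * δ < ε) :
    ∀ᶠ q in l, ∀ z ∈ K, ∀ w w₀,
      ((∀ k ∈ P, z ≠ p q k) → ‖w - simpleFractions P (p q) (v q) z - m‖ ≤ δ) →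
      ((∀ k ∈ P, z ≠ p₀ k) → ‖w₀ - simpleFractions P p₀ v₀ z - m‖ ≤ δ) →
      chordal (sphereValue (p q) P z w) (sphereValue p₀ P z w₀) < ε := by
  refine eventually_forall_mem_of_isCompact hK fun z₀ _ => ?_
  have hp' : ∀ k ∈ P, Tendsto (fun q : ζ × ℂ => p q.1 k) (l ×ˢ 𝓝 z₀) (𝓝 (p₀ k)) :=
    fun k hk => (hp k hk).comp tendsto_fst
  have hv' : ∀ k ∈ P, Tendsto (fun q : ζ × ℂ => v q.1 k) (l ×ˢ 𝓝 z₀) (𝓝 (v₀ k)) :=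
    fun k hk => (hv k hk).comp tendsto_fst
  by_cases hz₀ : ∃ b ∈ P, z₀ = p₀ b
  · obtain ⟨b, hb, rfl⟩ := hz₀
    exact eventually_chordal_lt_of_pole hinj hp' hv' hb (hv₀ b hb) tendsto_snd m δ hε
  · push Not at hz₀
    exact eventually_chordal_lt_of_not_pole hp' hv' tendsto_snd hz₀ m hδ

end SimpleFractions

/-- `S` is, off `L`, the Stieltjes transform of the measure `∑ w x • δ_x` over the points `x`
of `L`, the integral being a limit over symmetric windows. -/
def IsStieltjesTransform (L : Set ℝ) (w : ℝ → ℝ) (S : ℂ → ℂ) : Prop :=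
  ∀ z : ℂ, (∀ x ∈ L, z ≠ (x : ℂ)) →
    Tendsto (fun r : ℝ => ∑' x : ↥(L ∩ Set.Icc (-r) r), (w x : ℂ) / (((x : ℝ) : ℂ) - z))
      atTop (𝓝 (S z))

/-- The principal value at infinity of the sum of `1 / x` over the points of `L` with `ℓ < |x|`
is `H`. -/
def HasInvTail (L : Set ℝ) (ℓ H : ℝ) : Prop :=
  Tendsto (fun r : ℝ => ∑' x : ↥{t | t ∈ L ∧ ℓ < |t| ∧ |t| < r}, 1 / (x : ℝ)) atTop (𝓝 H)

/-- The sum of `1 / |x| ^ κ` over the points of `L` with `ℓ < |x|` is at most `T`, stated through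
finite sums so that it passes to limits of point configurations. -/
def InvPowTailLE (κ ℓ T : ℝ) (L : Set ℝ) : Prop :=
  ∀ F : Finset ℝ, (∀ x ∈ F, x ∈ L ∧ ℓ < |x|) → ∑ x ∈ F, 1 / |x| ^ κ ≤ T

/-- Bound, for `‖z‖ ≤ ρ`, on the error made when a Stieltjes transform is replaced by its part in
`[-ℓ, ℓ]` plus the mean weight times the principal value of the sum of `1 / x` outside. -/
noncomputable def truncationError (C A γbar κ θ ρ : ℝ) (τ : ℝ → ℝ) (ℓ : ℝ) : ℝ :=
  2 * (2 * (C * A ^ θ) * (4 / (1 - κ * θ) + 2) * ℓ ^ (κ * θ - 1)) + |γbar| * (2 * ρ * τ ℓ)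

theorem tendsto_truncationError {C A γbar κ θ ρ : ℝ} {τ : ℝ → ℝ} (hκθ : κ * θ < 1)
    (hτ : Tendsto τ atTop (𝓝 0)) :
    Tendsto (truncationError C A γbar κ θ ρ τ) atTop (𝓝 0) := by
  have hpow : Tendsto (fun ℓ : ℝ => ℓ ^ (κ * θ - 1)) atTop (𝓝 0) := by
    simpa only [neg_sub] using tendsto_rpow_neg_atTop (sub_pos.2 hκθ)
  have hsum := ((hpow.const_mul (2 * (C * A ^ θ) * (4 / (1 - κ * θ) + 2))).const_mul 2).add
    ((hτ.const_mul (2 * ρ)).const_mul |γbar|)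
  simp only [mul_zero, add_zero] at hsum
  exact hsum

section Truncation

variable {L : Set ℝ} {hL : LocallyFiniteSet L} {γ : ℤ → ℝ}
  {γbar C θ κ A x0 ℓ r ρ Hℓ T : ℝ} {τ : ℝ → ℝ} {S : ℂ → ℂ} {z : ℂ}

theorem HasInvTail.sub_eq_sum_annulus {H : ℝ → ℝ} (hL : LocallyFiniteSet L)
    (hH : ∀ ℓ, 1 ≤ ℓ → HasInvTail L ℓ (H ℓ)) (hℓ : 1 ≤ ℓ) :
    H 1 - H ℓ = ∑ x ∈ hL.annulus 1 ℓ, 1 / x := by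
  have := hL.regularRadii_neBot
  have hlim := ((hH 1 le_rfl).sub (hH ℓ hℓ)).mono_left (regularRadii_le_atTop L)
  refine tendsto_nhds_unique_of_eventuallyEq hlim tendsto_const_nhds ?_
  filter_upwards [regularRadii_le_atTop L (eventually_ge_atTop ℓ),
    eventually_regularRadii_notMem L] with r hr hrL
  rw [hL.tsum_annulus hrL.1 hrL.2 fun x => 1 / x, hL.tsum_annulus hrL.1 hrL.2 fun x => 1 / x,
    sub_eq_iff_eq_add, ← add_right_inj (∑ x ∈ hL.window 1, 1 / x),
    hL.sum_window_add_sum_annulus (hℓ.trans hr), ← add_assoc, hL.sum_window_add_sum_annulus hℓ,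
    hL.sum_window_add_sum_annulus hr]

theorem HasInvTail.tendsto_zero {H : ℝ → ℝ} (hL : LocallyFiniteSet L)
    (hH : ∀ ℓ, 1 ≤ ℓ → HasInvTail L ℓ (H ℓ)) : Tendsto H (regularRadii L) (𝓝 0) := by
  have hlim := ((hH 1 le_rfl).const_sub (H 1)).mono_left (regularRadii_le_atTop L)
  rw [sub_self] at hlim
  refine hlim.congr' ?_
  filter_upwards [regularRadii_le_atTop L (eventually_ge_atTop 1),
    eventually_regularRadii_notMem L] with ℓ hℓ hℓL
  rw [hL.tsum_annulus hℓL.1 hℓL.2 fun x => 1 / x, ← HasInvTail.sub_eq_sum_annulus hL hH hℓ,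
    sub_sub_cancel]

theorem InvPowTailLE.nonneg (hT : InvPowTailLE κ ℓ T L) : 0 ≤ T := by
  simpa only [Finset.sum_empty] using hT ∅ (by simp)

theorem InvPowTailLE.of_tsum_le (hT : 0 ≤ T)
    (h : ∑' x : ↥{t | t ∈ L ∧ ℓ < |t|}, ENNReal.ofReal (1 / |(x : ℝ)| ^ κ)
      ≤ ENNReal.ofReal T) : InvPowTailLE κ ℓ T L := by
  intro F hF
  rw [← ENNReal.ofReal_le_ofReal_iff hT, ENNReal.ofReal_sum_of_nonneg fun x _ => by positivity]
  refine le_trans ?_ h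
  rw [← Finset.sum_subtype_of_mem (p := fun x => x ∈ L ∧ ℓ < |x|)
    (fun x => ENNReal.ofReal (1 / |x| ^ κ)) hF]
  exact ENNReal.sum_le_tsum (f := fun x : ↥{t | t ∈ L ∧ ℓ < |t|} =>
    ENNReal.ofReal (1 / |(x : ℝ)| ^ κ)) _

theorem InvPowTailLE.norm_sum_annulus_inv_sub_inv_le (hT : InvPowTailLE κ ℓ T L) (hκ : κ ≤ 2)
    (hℓ : 1 ≤ ℓ) (hz : 2 * ‖z‖ ≤ ℓ) :
    ‖∑ x ∈ hL.annulus ℓ r, (((x : ℂ) - z)⁻¹ - (x : ℂ)⁻¹)‖ ≤ 2 * ‖z‖ * T := by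
  have hterm : ∀ x ∈ hL.annulus ℓ r,
      ‖((x : ℂ) - z)⁻¹ - (x : ℂ)⁻¹‖ ≤ 2 * ‖z‖ * (1 / |x| ^ κ) := by
    intro x hx
    have hℓx : ℓ < |x| := (hL.mem_annulus.1 hx).2.1
    have hx0 : 0 < |x| := by linarith
    have hpow : |x| ^ κ ≤ |x| ^ 2 := by
      rw [← Real.rpow_two]
      exact Real.rpow_le_rpow_of_exponent_le (by linarith) hκ
    refine (norm_inv_ofReal_sub_sub_inv_self_le (abs_pos.1 hx0) (hz.trans hℓx.le)).trans ?_
    gcongr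
  calc ‖∑ x ∈ hL.annulus ℓ r, (((x : ℂ) - z)⁻¹ - (x : ℂ)⁻¹)‖
      ≤ ∑ x ∈ hL.annulus ℓ r, 2 * ‖z‖ * (1 / |x| ^ κ) := norm_sum_le_of_le _ hterm
    _ ≤ 2 * ‖z‖ * T := by
        rw [← Finset.mul_sum]
        gcongr
        exact hT _ fun x hx => ⟨(hL.mem_annulus.1 hx).1, (hL.mem_annulus.1 hx).2.1⟩

theorem norm_simpleFractions_window_sub_le (hγ : RegularSums γ γbar C θ)
    (hN : hL.CountingBound A κ ℓ) (hT : InvPowTailLE κ ℓ (τ ℓ) L) (hκ : κ ∈ Set.Icc 0 2)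
    (hθ : 0 ≤ θ) (hκθ : κ * θ < 1) (hℓ : 1 ≤ ℓ) (hx0 : |x0| ≤ ℓ) (hρ : 2 * ρ ≤ ℓ)
    (hz : ‖z‖ ≤ ρ) (hr : ℓ ≤ r) :
    ‖simpleFractions (hL.window r) Complex.ofReal (fun x => weightFun L x0 γ x) z
        - simpleFractions (hL.window ℓ) Complex.ofReal (fun x => weightFun L x0 γ x) z
        - ((γbar * ∑ x ∈ hL.annulus ℓ r, 1 / x : ℝ) : ℂ)‖
      ≤ truncationError C A γbar κ θ ρ τ ℓ := by
  have hzℓ : 2 * ‖z‖ ≤ ℓ := by linarith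
  have hdecomp : simpleFractions (hL.window r) Complex.ofReal (fun x => weightFun L x0 γ x) z
        - simpleFractions (hL.window ℓ) Complex.ofReal (fun x => weightFun L x0 γ x) z
        - ((γbar * ∑ x ∈ hL.annulus ℓ r, 1 / x : ℝ) : ℂ)
      = ∑ x ∈ hL.annulus ℓ r, ((weightFun L x0 γ x - γbar : ℝ) : ℂ) / ((x : ℂ) - z)
        + (γbar : ℂ) * ∑ x ∈ hL.annulus ℓ r, (((x : ℂ) - z)⁻¹ - (x : ℂ)⁻¹) := by
    rw [simpleFractions, simpleFractions, ← hL.sum_window_add_sum_annulus hr,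
      add_sub_cancel_left]
    push_cast
    rw [Finset.mul_sum, Finset.mul_sum, ← Finset.sum_sub_distrib, ← Finset.sum_add_distrib]
    exact Finset.sum_congr rfl fun x _ => by ring
  rw [hdecomp, truncationError]
  refine (norm_add_le _ _).trans (add_le_add
    (hγ.norm_sum_annulus_sub_div_le hN hκ.1 hθ hκθ (by linarith) hx0 hzℓ) ?_)
  rw [norm_mul, Complex.norm_real, Real.norm_eq_abs]
  have hτ := hT.nonneg
  exact mul_le_mul_of_nonneg_left ((hT.norm_sum_annulus_inv_sub_inv_le hκ.2 hℓ hzℓ).trans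
    (by gcongr)) (abs_nonneg _)

theorem IsStieltjesTransform.norm_sub_simpleFractions_window_sub_le
    (hS : IsStieltjesTransform L (weightFun L x0 γ) S) (hH : HasInvTail L ℓ Hℓ)
    (hγ : RegularSums γ γbar C θ) (hN : hL.CountingBound A κ ℓ)
    (hT : InvPowTailLE κ ℓ (τ ℓ) L) (hκ : κ ∈ Set.Icc 0 2) (hθ : 0 ≤ θ) (hκθ : κ * θ < 1)
    (hℓ : 1 ≤ ℓ) (hx0 : |x0| ≤ ℓ) (hρ : 2 * ρ ≤ ℓ) (hz : ‖z‖ ≤ ρ)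
    (hzL : ∀ x ∈ L, z ≠ (x : ℂ)) :
    ‖S z - simpleFractions (hL.window ℓ) Complex.ofReal (fun x => weightFun L x0 γ x) z
        - ((γbar * Hℓ : ℝ) : ℂ)‖ ≤ truncationError C A γbar κ θ ρ τ ℓ := by
  have := hL.regularRadii_neBot
  have hlim := (((hS z hzL).sub_const (simpleFractions (hL.window ℓ) Complex.ofReal
    (fun x => weightFun L x0 γ x) z)).sub
      ((Complex.continuous_ofReal.tendsto _).comp (hH.const_mul γbar))).norm
  refine le_of_tendsto (hlim.mono_left (regularRadii_le_atTop L)) ?_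
  filter_upwards [regularRadii_le_atTop L (eventually_ge_atTop ℓ),
    eventually_regularRadii_notMem L] with r hr hrL
  rw [Function.comp_apply, hL.tsum_annulus hrL.1 hrL.2 fun x => 1 / x,
    hL.tsum_inter_Icc r fun x => ((weightFun L x0 γ x : ℝ) : ℂ) / ((x : ℂ) - z)]
  exact norm_simpleFractions_window_sub_le hγ hN hT hκ hθ hκθ hℓ hx0 hρ hz hr

end Truncation

/-- Local weak convergence of the simple point measures with supports `Ln n` to the one with
support `L`. -/
def VagueTendsto {ι : Type*} (Ln : ι → Set ℝ) (l : Filter ι) (L : Set ℝ) : Prop :=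
  ∀ f : ℝ → ℝ, Continuous f → HasCompactSupport f →
    Tendsto (fun n => ∑' x : ↥(Ln n), f (x : ℝ)) l (𝓝 (∑' x : ↥L, f (x : ℝ)))

/-- `φ n` carries the points of `L` to nearby points of `Ln n`, and exhausts the points of `Ln n`
in `[-ℓ, ℓ]` for every regular radius `ℓ`. -/
structure IsMatching {ι : Type*} {Ln : ι → Set ℝ} {L : Set ℝ}
    (hLn : ∀ n, LocallyFiniteSet (Ln n)) (l : Filter ι) (hL : LocallyFiniteSet L)
    (φ : ι → ℝ → ℝ) : Prop where
  tendsto : ∀ a ∈ L, Tendsto (φ · a) l (𝓝 a)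
  image_window : ∀ ℓ, ℓ ∉ L → -ℓ ∉ L →
    ∀ᶠ n in l, (hL.window ℓ).image (φ n) = (hLn n).window ℓ

section Matching

variable {ι : Type*} {Ln : ι → Set ℝ} {l : Filter ι} {L : Set ℝ}
  {hLn : ∀ n, LocallyFiniteSet (Ln n)} {hL : LocallyFiniteSet L} {K U : Set ℝ} {a ℓ : ℝ}

theorem LocallyFiniteSet.mono {L' : Set ℝ} (hL : LocallyFiniteSet L) (h : L' ⊆ L) :
    LocallyFiniteSet L' :=
  fun b c => (hL b c).subset (Set.inter_subset_inter_left _ h)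

theorem LocallyFiniteSet.exists_closedBall_disjoint (hL : LocallyFiniteSet L) (a : ℝ) :
    ∃ δ > 0, Disjoint (Metric.closedBall a δ) (L \ {a}) := by
  have hclosed : IsClosed (L \ {a}) := (hL.mono Set.sdiff_subset).isClosed
  obtain ⟨δ, hδ, hball⟩ := Metric.nhds_basis_closedBall.mem_iff.1
    (hclosed.isOpen_compl.mem_nhds (show a ∈ (L \ {a})ᶜ from fun h => h.2 rfl))
  exact ⟨δ, hδ, Set.disjoint_left.2 fun x hx => hball hx⟩

theorem LocallyFiniteSet.summable_of_hasCompactSupport (hL : LocallyFiniteSet L) {f : ℝ → ℝ}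
    (hf : HasCompactSupport f) : Summable fun x : ↥L => f x := by
  obtain ⟨R, hR⟩ := hf.isCompact.isBounded.subset_closedBall 0
  refine summable_of_hasFiniteSupport (Set.Finite.of_finite_image (f := Subtype.val)
    ((hL (-R) R).subset ?_) Subtype.val_injective.injOn)
  rintro _ ⟨x, hx, rfl⟩
  have hxR := hR (subset_tsupport f hx)
  rw [Real.closedBall_eq_Icc, zero_sub, zero_add] at hxR
  exact ⟨x.2, hxR⟩

theorem LocallyFiniteSet.sum_le_tsum (hL : LocallyFiniteSet L) {f : ℝ → ℝ}
    (hf : HasCompactSupport f) (hf0 : ∀ x, 0 ≤ f x) {F : Finset ℝ} (hF : ∀ x ∈ F, x ∈ L) :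
    ∑ x ∈ F, f x ≤ ∑' x : ↥L, f x := by
  rw [← Finset.sum_subtype_of_mem f hF]
  exact (hL.summable_of_hasCompactSupport hf).sum_le_tsum _ fun x _ => hf0 x

namespace VagueTendsto

theorem eventually_disjoint (h : VagueTendsto Ln l L) (hLn : ∀ n, LocallyFiniteSet (Ln n))
    (hL : LocallyFiniteSet L) (hK : IsCompact K) (hKL : Disjoint K L) :
    ∀ᶠ n in l, Disjoint K (Ln n) := by
  obtain ⟨f, hf1, hf0, hfc, hf⟩ :=
    exists_continuous_one_zero_of_isCompact hK hL.isClosed hKL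
  have hzero : ∑' x : ↥L, f (x : ℝ) = 0 :=
    (tsum_congr fun x : ↥L => hf0 x.2).trans tsum_zero
  filter_upwards [(h f f.continuous hfc).eventually_lt_const (hzero.trans_lt one_pos)] with n hn
  refine Set.disjoint_left.2 fun x hx hxL => hn.not_ge ?_
  have hle := (hLn n).sum_le_tsum hfc (fun x => (hf x).1) (F := {x})
    (fun y hy => by rwa [Finset.mem_singleton.1 hy])
  rwa [Finset.sum_singleton, hf1 hx] at hle

theorem eventually_inter_nonempty (h : VagueTendsto Ln l L) (hL : LocallyFiniteSet L)
    (hU : IsOpen U) (haL : a ∈ L) (haU : a ∈ U) : ∀ᶠ n in l, (Ln n ∩ U).Nonempty := by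
  obtain ⟨f, hf1, hf0, hfc, hf⟩ := exists_continuous_one_zero_of_isCompact
    (isCompact_singleton (x := a)) hU.isClosed_compl
    (Set.disjoint_singleton_left.2 fun h => h haU)
  have hpos : 0 < ∑' x : ↥L, f (x : ℝ) := by
    have hle := hL.sum_le_tsum hfc (fun x => (hf x).1) (F := {a})
      (fun y hy => by rwa [Finset.mem_singleton.1 hy])
    rw [Finset.sum_singleton, hf1 rfl] at hle
    exact one_pos.trans_le hle
  filter_upwards [(h f f.continuous hfc).eventually_const_lt hpos] with n hn
  contrapose! hn
  exact ((tsum_congr fun x : ↥(Ln n) =>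
    hf0 fun hx => (hn.subset ⟨x.2, hx⟩ : (x : ℝ) ∈ (∅ : Set ℝ))).trans tsum_zero).le

theorem eventually_inter_subsingleton (h : VagueTendsto Ln l L)
    (hLn : ∀ n, LocallyFiniteSet (Ln n)) (hL : LocallyFiniteSet L) (haL : a ∈ L)
    (hK : IsCompact K) (hKL : Disjoint K (L \ {a})) :
    ∀ᶠ n in l, (Ln n ∩ K).Subsingleton := by
  obtain ⟨f, hf1, hf0, hfc, hf⟩ := exists_continuous_one_zero_of_isCompact hK
    (hL.mono Set.sdiff_subset).isClosed hKL
  have htsum : ∑' x : ↥L, f (x : ℝ) < 2 := by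
    rw [tsum_eq_single (⟨a, haL⟩ : ↥L) fun x hx => hf0 ⟨x.2, fun h => hx (Subtype.ext h)⟩]
    exact (hf a).2.trans_lt one_lt_two
  filter_upwards [(h f f.continuous hfc).eventually_lt_const htsum] with n hn x hx y hy
  by_contra hxy
  have hle := (hLn n).sum_le_tsum hfc (fun x => (hf x).1) (F := {x, y}) (by
    simp only [Finset.mem_insert, Finset.mem_singleton, forall_eq_or_imp, forall_eq]
    exact ⟨hx.1, hy.1⟩)
  rw [Finset.sum_pair hxy, hf1 hx.2, hf1 hy.2, Pi.one_apply, Pi.one_apply,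
    one_add_one_eq_two] at hle
  exact hn.not_ge hle

theorem exists_tendsto_point (h : VagueTendsto Ln l L) (hLn : ∀ n, LocallyFiniteSet (Ln n))
    (hL : LocallyFiniteSet L) (haL : a ∈ L) :
    ∃ (p : ι → ℝ) (δ : ℝ), 0 < δ ∧ Tendsto p l (𝓝 a) ∧
      ∀ᶠ n in l, Ln n ∩ Metric.closedBall a δ = {p n} := by
  obtain ⟨δ, hδ, hdisj⟩ := hL.exists_closedBall_disjoint a
  have hnonempty : ∀ r > 0, ∀ᶠ n in l, (Ln n ∩ Metric.ball a r).Nonempty := fun r hr =>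
    h.eventually_inter_nonempty hL Metric.isOpen_ball haL (Metric.mem_ball_self hr)
  have hex : ∀ᶠ n in l, ∃ y, Ln n ∩ Metric.closedBall a δ = {y} := by
    filter_upwards [hnonempty δ hδ,
      h.eventually_inter_subsingleton hLn hL haL (isCompact_closedBall a δ) hdisj] with n hn hn'
    exact Set.exists_eq_singleton_iff_nonempty_subsingleton.2
      ⟨hn.mono (Set.inter_subset_inter_right _ Metric.ball_subset_closedBall), hn'⟩
  obtain ⟨p, hp⟩ := Filter.skolem.1 hex
  refine ⟨p, δ, hδ, Metric.tendsto_nhds.2 fun ε hε => ?_, hp⟩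
  filter_upwards [hp, hnonempty (min ε δ) (lt_min hε hδ)] with n hn ⟨y, hyL, hy⟩
  have hyδ : y ∈ Metric.closedBall a δ :=
    Metric.ball_subset_closedBall (Metric.ball_subset_ball (min_le_right _ _) hy)
  have hyp : y = p n := hn.subset ⟨hyL, hyδ⟩
  exact hyp ▸ Metric.ball_subset_ball (min_le_left _ _) hy

theorem exists_isMatching (h : VagueTendsto Ln l L) (hLn : ∀ n, LocallyFiniteSet (Ln n))
    (hL : LocallyFiniteSet L) : ∃ φ, IsMatching hLn l hL φ := by
  have hex : ∀ a ∈ L, ∃ (p : ι → ℝ) (δ : ℝ), 0 < δ ∧ Tendsto p l (𝓝 a) ∧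
      ∀ᶠ n in l, Ln n ∩ Metric.closedBall a δ = {p n} :=
    fun a ha => h.exists_tendsto_point hLn hL ha
  choose! p δ hδ hp hball using hex
  refine ⟨fun n a => p a n, hp, fun ℓ hℓ hℓ' => ?_⟩
  have hcover : ∀ᶠ n in l,
      Disjoint (Set.Icc (-ℓ) ℓ \ ⋃ a ∈ hL.window ℓ, Metric.ball a (δ a)) (Ln n) :=
    h.eventually_disjoint hLn hL
      (isCompact_Icc.diff (isOpen_biUnion fun _ _ => Metric.isOpen_ball))
      (Set.disjoint_left.2 fun x hx hxL => hx.2 (Set.mem_biUnion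
        (hL.mem_window.2 ⟨hxL, abs_le.2 hx.1⟩) (Metric.mem_ball_self (hδ x hxL))))
  have hinside : ∀ a ∈ hL.window ℓ, ∀ᶠ n in l, |p a n| < ℓ := by
    intro a ha
    obtain ⟨haL, haℓ⟩ := hL.mem_window.1 ha
    refine (hp a haL).abs.eventually_lt_const (haℓ.lt_of_ne fun haℓ => ?_)
    rcases eq_or_eq_neg_of_abs_eq haℓ with rfl | rfl
    exacts [hℓ haL, hℓ' haL]
  filter_upwards [hcover,
    (Filter.eventually_all_finset _).2 fun a ha => hball a (hL.mem_window.1 ha).1,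
    (Filter.eventually_all_finset _).2 hinside] with n hn hballn hinn
  refine Finset.Subset.antisymm (Finset.image_subset_iff.2 fun a ha => ?_) fun x hx => ?_
  · exact (hLn n).mem_window.2 ⟨((hballn a ha).symm.subset rfl).1, (hinn a ha).le⟩
  · obtain ⟨hxL, hxℓ⟩ := (hLn n).mem_window.1 hx
    have hxcover : x ∈ ⋃ a ∈ hL.window ℓ, Metric.ball a (δ a) := by
      by_contra hcon
      exact Set.disjoint_left.1 hn ⟨abs_le.1 hxℓ, hcon⟩ hxL
    obtain ⟨a, ha, hxa⟩ := Set.mem_iUnion₂.1 hxcover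
    have hxp : x = p a n := (hballn a ha).subset ⟨hxL, Metric.ball_subset_closedBall hxa⟩
    exact Finset.mem_image.2 ⟨a, ha, hxp.symm⟩

end VagueTendsto

theorem IsMatching.eventually_mem {φ : ι → ℝ → ℝ} (hφ : IsMatching hLn l hL φ) (haL : a ∈ L) :
    ∀ᶠ n in l, φ n a ∈ Ln n := by
  have := hL.regularRadii_neBot
  obtain ⟨ℓ, hℓ, hℓL⟩ := (((eventually_ge_atTop |a|).filter_mono (regularRadii_le_atTop L)).and
    (eventually_regularRadii_notMem L)).exists
  filter_upwards [hφ.image_window ℓ hℓL.1 hℓL.2] with n hn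
  exact ((hLn n).mem_window.1
    (hn ▸ Finset.mem_image_of_mem (φ n) (hL.mem_window.2 ⟨haL, hℓ⟩))).1

end Matching

section Weights

variable {L L' : Set ℝ} {hL : LocallyFiniteSet L} {hL' : LocallyFiniteSet L'} {ψ : ℝ → ℝ}
  {x0 ℓ a : ℝ}

theorem LocallyFiniteSet.card_inter_eq_of_image_window
    (himage : (hL.window ℓ).image ψ = hL'.window ℓ) (hψ : Set.InjOn ψ (hL.window ℓ))
    {s s' : Set ℝ} (hs : s ⊆ Set.Icc (-ℓ) ℓ) (hs' : s' ⊆ Set.Icc (-ℓ) ℓ)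
    (hmem : ∀ b ∈ hL.window ℓ, ψ b ∈ s' ↔ b ∈ s) :
    Nat.card ↥(L' ∩ s') = Nat.card ↥(L ∩ s) := by
  have hwindow : ∀ b ∈ L ∩ s, b ∈ hL.window ℓ := fun b hb =>
    hL.mem_window.2 ⟨hb.1, abs_le.2 (hs hb.2)⟩
  have himage_inter : L' ∩ s' = ψ '' (L ∩ s) := by
    refine Set.Subset.antisymm (fun y hy => ?_) (Set.image_subset_iff.2 fun b hb => ?_)
    · have hyw : y ∈ (hL.window ℓ).image ψ :=
        himage ▸ hL'.mem_window.2 ⟨hy.1, abs_le.2 (hs' hy.2)⟩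
      obtain ⟨b, hb, rfl⟩ := Finset.mem_image.1 hyw
      exact ⟨b, ⟨(hL.mem_window.1 hb).1, (hmem b hb).1 hy.2⟩, rfl⟩
    · have hbw := hwindow b hb
      exact ⟨(hL'.mem_window.1 (himage ▸ Finset.mem_image_of_mem ψ hbw)).1, (hmem b hbw).2 hb.2⟩
  rw [himage_inter, Nat.card_image_of_injOn (hψ.mono hwindow)]

theorem weightFun_apply_of_image_window (hx0ℓ : |x0| ≤ ℓ)
    (himage : (hL.window ℓ).image ψ = hL'.window ℓ) (hψ : StrictMonoOn ψ (hL.window ℓ))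
    (hx0 : ∀ b ∈ hL.window ℓ, (x0 < ψ b ↔ x0 < b) ∧ (ψ b < x0 ↔ b < x0)) (γ : ℤ → ℝ)
    (ha : a ∈ hL.window ℓ) : weightFun L' x0 γ (ψ a) = weightFun L x0 γ a := by
  have hx0' := abs_le.1 hx0ℓ
  have ha' := abs_le.1 (hL.mem_window.1 ha).2
  have hψa := abs_le.1 (hL'.mem_window.1 (himage ▸ Finset.mem_image_of_mem ψ ha)).2
  have hafter : Nat.card ↥(L' ∩ Set.Ioc x0 (ψ a)) = Nat.card ↥(L ∩ Set.Ioc x0 a) :=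
    LocallyFiniteSet.card_inter_eq_of_image_window himage hψ.injOn
      (fun y hy => ⟨hx0'.1.trans hy.1.le, hy.2.trans ha'.2⟩)
      (fun y hy => ⟨hx0'.1.trans hy.1.le, hy.2.trans hψa.2⟩)
      fun b hb => and_congr (hx0 b hb).1 (hψ.le_iff_le hb ha)
  have hbefore : Nat.card ↥(L' ∩ Set.Ico (ψ a) x0) = Nat.card ↥(L ∩ Set.Ico a x0) :=
    LocallyFiniteSet.card_inter_eq_of_image_window himage hψ.injOn
      (fun y hy => ⟨ha'.1.trans hy.1, hy.2.le.trans hx0'.2⟩)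
      (fun y hy => ⟨hψa.1.trans hy.1, hy.2.le.trans hx0'.2⟩)
      fun b hb => and_congr (hψ.le_iff_le ha hb) (hx0 b hb).2
  simp only [weightFun, (hx0 a ha).1, hafter, hbefore]

variable {ι : Type*} {l : Filter ι} {Ln : ι → Set ℝ} {hLn : ∀ n, LocallyFiniteSet (Ln n)}
  {φ : ι → ℝ → ℝ} {P : Finset ℝ} {γ : ℤ → ℝ} {γn : ι → ℤ → ℝ} {κ T : ℝ}

theorem eventually_strictMonoOn_of_tendsto (hφ : ∀ b ∈ P, Tendsto (φ · b) l (𝓝 b)) :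
    ∀ᶠ n in l, StrictMonoOn (φ n) P := by
  have hlt : ∀ᶠ n in l, ∀ b ∈ P, ∀ c ∈ P, b < c → φ n b < φ n c :=
    (Filter.eventually_all_finset P).2 fun b hb =>
      (Filter.eventually_all_finset P).2 fun c hc =>
        Filter.eventually_imp_distrib_left.2 ((hφ b hb).eventually_lt (hφ c hc))
  exact hlt.mono fun n hn b hb c hc => hn b hb c hc

theorem eventually_lt_iff_lt_of_tendsto (hφ : ∀ b ∈ P, Tendsto (φ · b) l (𝓝 b)) (hx0 : x0 ∉ P) :
    ∀ᶠ n in l, ∀ b ∈ P, (x0 < φ n b ↔ x0 < b) ∧ (φ n b < x0 ↔ b < x0) := by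
  refine (Filter.eventually_all_finset P).2 fun b hb => ?_
  rcases lt_or_gt_of_ne (ne_of_mem_of_not_mem hb hx0) with hbx0 | hbx0
  · filter_upwards [(hφ b hb).eventually_lt_const hbx0] with n hn
    exact ⟨iff_of_false hn.not_gt hbx0.not_gt, iff_of_true hn hbx0⟩
  · filter_upwards [(hφ b hb).eventually_const_lt hbx0] with n hn
    exact ⟨iff_of_true hn hbx0, iff_of_false hn.not_gt hbx0.not_gt⟩

namespace IsMatching

theorem tendsto_of_mem_window (hφ : IsMatching hLn l hL φ) :
    ∀ b ∈ hL.window ℓ, Tendsto (φ · b) l (𝓝 b) :=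
  fun b hb => hφ.tendsto b (hL.mem_window.1 hb).1

theorem tendsto_weightFun (hφ : IsMatching hLn l hL φ) (hx0 : x0 ∉ L)
    (hγ : ∀ k, Tendsto (γn · k) l (𝓝 (γ k))) (haL : a ∈ L) :
    Tendsto (fun n => weightFun (Ln n) x0 (γn n) (φ n a)) l (𝓝 (weightFun L x0 γ a)) := by
  have := hL.regularRadii_neBot
  obtain ⟨ℓ, hℓ, hℓL⟩ := (((eventually_ge_atTop (max |x0| |a|)).filter_mono
    (regularRadii_le_atTop L)).and (eventually_regularRadii_notMem L)).exists
  refine (hγ _).congr' ?_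
  filter_upwards [hφ.image_window ℓ hℓL.1 hℓL.2,
    eventually_strictMonoOn_of_tendsto hφ.tendsto_of_mem_window,
    eventually_lt_iff_lt_of_tendsto hφ.tendsto_of_mem_window
      fun h => hx0 (hL.mem_window.1 h).1] with n himage hmono hside
  exact (weightFun_apply_of_image_window ((le_max_left _ _).trans hℓ) himage hmono hside (γn n)
    (hL.mem_window.2 ⟨haL, (le_max_right _ _).trans hℓ⟩)).symm

theorem invPowTailLE [l.NeBot] (hφ : IsMatching hLn l hL φ) (hℓ : 0 ≤ ℓ)
    (hT : ∀ n, InvPowTailLE κ ℓ T (Ln n)) : InvPowTailLE κ ℓ T L := by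
  intro F hF
  have hpos : ∀ x ∈ F, 0 < |x| := fun x hx => hℓ.trans_lt (hF x hx).2
  have hlim : Tendsto (fun n => ∑ x ∈ F, 1 / |φ n x| ^ κ) l (𝓝 (∑ x ∈ F, 1 / |x| ^ κ)) :=
    tendsto_finsetSum F fun x hx => tendsto_const_nhds.div
      ((hφ.tendsto x (hF x hx).1).abs.rpow_const (Or.inl (hpos x hx).ne'))
      (Real.rpow_pos_of_pos (hpos x hx) κ).ne'
  have hmem : ∀ᶠ n in l, ∀ x ∈ F, φ n x ∈ Ln n ∧ ℓ < |φ n x| :=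
    (Filter.eventually_all_finset F).2 fun x hx => (hφ.eventually_mem (hF x hx).1).and
      ((hφ.tendsto x (hF x hx).1).abs.eventually_const_lt (hF x hx).2)
  refine le_of_tendsto hlim ?_
  filter_upwards [hmem, eventually_strictMonoOn_of_tendsto fun x hx => hφ.tendsto x (hF x hx).1]
    with n hn hmono
  rw [← Finset.sum_image (f := fun y => 1 / |y| ^ κ) hmono.injOn]
  exact hT n _ (Finset.forall_mem_image.2 hn)

end IsMatching

end Weights

section Assembly

variable {ι : Type*} {l : Filter ι} {Ln : ι → Set ℝ} {L : Set ℝ}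
  {hLn : ∀ n, LocallyFiniteSet (Ln n)} {hL : LocallyFiniteSet L}
  {φ : ι → ℝ → ℝ} {κ ℓ M R T x0 : ℝ} {τ : ℝ → ℝ} {z : ℂ}

theorem InvPowTailLE.countingBound (hT : InvPowTailLE κ R T L) (hκ : 0 ≤ κ) (hR : 1 ≤ R)
    (hM : ((hL.window R).card : ℝ) ≤ M) : hL.CountingBound (M + T) κ R := by
  intro x hx
  have hx1 : 1 ≤ x := hR.trans hx
  have hcard : ((hL.window x).card : ℝ) = (hL.window R).card + (hL.annulus R x).card := by
    simpa only [Finset.sum_const, nsmul_eq_mul, mul_one] using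
      (hL.sum_window_add_sum_annulus hx fun _ => (1 : ℝ)).symm
  have hannulus : ((hL.annulus R x).card : ℝ) * (1 / x ^ κ) ≤ T := by
    rw [← nsmul_eq_mul]
    refine (Finset.card_nsmul_le_sum _ _ _ fun y hy => ?_).trans
      (hT (hL.annulus R x) fun y hy => ⟨(hL.mem_annulus.1 hy).1, (hL.mem_annulus.1 hy).2.1⟩)
    obtain ⟨-, hRy, hyx⟩ := hL.mem_annulus.1 hy
    have hy0 : 0 < |y| := by linarith
    gcongr
  rw [mul_one_div, div_le_iff₀ (Real.rpow_pos_of_pos (by linarith) κ)] at hannulus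
  calc ((hL.window x).card : ℝ) ≤ M + T * x ^ κ := hcard ▸ add_le_add hM hannulus
    _ ≤ M * x ^ κ + T * x ^ κ := by
        gcongr
        exact le_mul_of_one_le_right ((Nat.cast_nonneg _).trans hM) (Real.one_le_rpow hx1 hκ)
    _ = (M + T) * x ^ κ := (add_mul _ _ _).symm

theorem IsMatching.exists_countingBound [l.NeBot] (hφ : IsMatching hLn l hL φ) (hκ : 0 ≤ κ)
    (hT : ∀ n ℓ, 1 ≤ ℓ → InvPowTailLE κ ℓ (τ ℓ) (Ln n)) :
    ∃ A R, hL.CountingBound A κ R ∧ ∀ᶠ n in l, (hLn n).CountingBound A κ R := by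
  have := hL.regularRadii_neBot
  obtain ⟨R, hR, hRL⟩ := (((eventually_ge_atTop 1).filter_mono (regularRadii_le_atTop L)).and
    (eventually_regularRadii_notMem L)).exists
  refine ⟨(hL.window R).card + τ R, R,
    (hφ.invPowTailLE (by linarith) fun n => hT n R hR).countingBound hκ hR le_rfl, ?_⟩
  filter_upwards [hφ.image_window R hRL.1 hRL.2] with n hn
  exact (hT n R hR).countingBound hκ hR (hn ▸ Nat.cast_le.2 Finset.card_image_le)

theorem LocallyFiniteSet.forall_mem_ne_iff_window (hL : LocallyFiniteSet L) (hz : ‖z‖ ≤ ℓ) :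
    (∀ x ∈ L, z ≠ x) ↔ ∀ x ∈ hL.window ℓ, z ≠ x := by
  refine ⟨fun h x hx => h x (hL.mem_window.1 hx).1, fun h x hx hzx => h x ?_ hzx⟩
  rw [hL.mem_window, ← Real.norm_eq_abs, ← Complex.norm_real, ← hzx]
  exact ⟨hx, hz⟩

theorem IsMatching.eventually_chordal_lt (hφ : IsMatching hLn l hL φ) (hℓ : ℓ ∉ L ∧ -ℓ ∉ L)
    {γn : ι → ℤ → ℝ} {γ : ℤ → ℝ} (hγ : ∀ k, Tendsto (γn · k) l (𝓝 (γ k))) (hγ0 : ∀ k, γ k ≠ 0)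
    (hx0 : x0 ∉ L) {K : Set ℂ} (hK : IsCompact K) (hKℓ : ∀ z ∈ K, ‖z‖ ≤ ℓ) (m : ℂ) {δ ε : ℝ}
    (hε : 0 < ε) (hδ : 2 * δ < ε) :
    ∀ᶠ n in l, ∀ z ∈ K, ∀ w w₀,
      ((∀ x ∈ Ln n, z ≠ x) → ‖w - simpleFractions ((hLn n).window ℓ) Complex.ofReal
        (fun x => weightFun (Ln n) x0 (γn n) x) z - m‖ ≤ δ) →
      ((∀ x ∈ L, z ≠ x) → ‖w₀ - simpleFractions (hL.window ℓ) Complex.ofReal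
        (fun x => weightFun L x0 γ x) z - m‖ ≤ δ) →
      chordal (sphereValue Complex.ofReal (Ln n) z w) (sphereValue Complex.ofReal L z w₀) < ε := by
  have hchordal := eventually_forall_mem_chordal_lt (P := hL.window ℓ)
    (p := fun n a => (φ n a : ℂ)) (v := fun n a => (weightFun (Ln n) x0 (γn n) (φ n a) : ℂ))
    (p₀ := Complex.ofReal) (v₀ := fun a => (weightFun L x0 γ a : ℂ))
    Complex.ofReal_injective.injOn
    (fun a ha => (Complex.continuous_ofReal.tendsto a).comp (hφ.tendsto_of_mem_window a ha))
    (fun a ha => (Complex.continuous_ofReal.tendsto _).comp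
      (hφ.tendsto_weightFun hx0 hγ (hL.mem_window.1 ha).1))
    (fun a _ => Complex.ofReal_ne_zero.2 (hγ0 _)) hK m hε hδ
  filter_upwards [hchordal, hφ.image_window ℓ hℓ.1 hℓ.2,
    eventually_strictMonoOn_of_tendsto hφ.tendsto_of_mem_window] with n hn himage hmono
    z hz w w₀ hw hw₀
  have hpole := hL.forall_mem_ne_iff_window (hKℓ z hz)
  have hpole_n : (∀ x ∈ Ln n, z ≠ x) ↔ ∀ a ∈ hL.window ℓ, z ≠ φ n a := by
    rw [(hLn n).forall_mem_ne_iff_window (hKℓ z hz), ← himage, Finset.forall_mem_image]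
  rw [hpole_n, ← himage, simpleFractions_image hmono.injOn] at hw
  rw [hpole] at hw₀
  rw [sphereValue_congr hpole, sphereValue_congr hpole_n]
  exact hn z hz w w₀ hw hw₀

theorem exists_truncation_radius (hL : LocallyFiniteSet L) {C A γbar θ ρ h : ℝ}
    (hκθ : κ * θ < 1) (hτ : Tendsto τ atTop (𝓝 0)) {HL Hinf : ℝ → ℝ}
    (hHL : ∀ ℓ, 1 ≤ ℓ → HasInvTail L ℓ (HL ℓ)) (hh : Tendsto Hinf (regularRadii L) (𝓝 h)) (B : ℝ)
    {δ : ℝ} (hδ : 0 < δ) :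
    ∃ ℓ ≥ B, (ℓ ∉ L ∧ -ℓ ∉ L) ∧ truncationError C A γbar κ θ ρ τ ℓ < δ ∧
      |γbar * Hinf ℓ - γbar * (HL ℓ + h)| < δ := by
  have := hL.regularRadii_neBot
  have hHlim : Tendsto (fun ℓ => |γbar * Hinf ℓ - γbar * (HL ℓ + h)|) (regularRadii L) (𝓝 0) := by
    simpa only [zero_add, sub_self, abs_zero] using ((hh.const_mul γbar).sub
      (((HasInvTail.tendsto_zero hL hHL).add_const h).const_mul γbar)).abs
  have herr := (tendsto_truncationError (C := C) (A := A) (γbar := γbar) (ρ := ρ) hκθ hτ).mono_left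
    (regularRadii_le_atTop L)
  exact (((eventually_ge_atTop B).filter_mono (regularRadii_le_atTop L)).and
    ((eventually_regularRadii_notMem L).and ((herr.eventually_lt_const hδ).and
      (hHlim.eventually_lt_const hδ)))).exists

end Assembly

theorem stieltjes_transform_continuity_general {ι : Type*} {l : Filter ι}
    {Ln : ι → Set ℝ} {L : Set ℝ} (hLn : ∀ n, LocallyFiniteSet (Ln n)) (hL : LocallyFiniteSet L)
    (hweak : VagueTendsto Ln l L) {κ θ : ℝ} (hκ : κ ∈ Set.Icc 0 2) (hθ : 0 ≤ θ)
    (hκθ : κ * θ < 1) {τ : ℝ → ℝ} (hτ0 : Tendsto τ atTop (𝓝 0))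
    (hτ : ∀ n ℓ, 1 ≤ ℓ → InvPowTailLE κ ℓ (τ ℓ) (Ln n)) {H : ι → ℝ → ℝ} {HL Hinf : ℝ → ℝ}
    (hH : ∀ n ℓ, 1 ≤ ℓ → HasInvTail (Ln n) ℓ (H n ℓ))
    (hHL : ∀ ℓ, 1 ≤ ℓ → HasInvTail L ℓ (HL ℓ)) {h : ℝ}
    (hHinf : ∀ ℓ, 1 ≤ ℓ → ℓ ∉ L → -ℓ ∉ L → Tendsto (H · ℓ) l (𝓝 (Hinf ℓ)))
    (hh : Tendsto Hinf (regularRadii L) (𝓝 h)) {γn : ι → ℤ → ℝ} {γ : ℤ → ℝ}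
    (hγ0 : ∀ k, γ k ≠ 0) (hγlim : ∀ k, Tendsto (γn · k) l (𝓝 (γ k))) {γbar C : ℝ}
    (hγn : ∀ n, RegularSums (γn n) γbar C θ) {x0 : ℝ} (hx0 : x0 ∉ L) {Sn : ι → ℂ → ℂ}
    {S : ℂ → ℂ}
    (hSn : ∀ n, x0 ∉ Ln n → IsStieltjesTransform (Ln n) (weightFun (Ln n) x0 (γn n)) (Sn n))
    (hS : IsStieltjesTransform L (weightFun L x0 γ) S) {K : Set ℂ} (hK : IsCompact K) {ε : ℝ}
    (hε : 0 < ε) :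
    ∀ᶠ n in l, ∀ z ∈ K, chordal (sphereValue Complex.ofReal (Ln n) z (Sn n z))
      (sphereValue Complex.ofReal L z (S z + ((γbar * h : ℝ) : ℂ))) < ε := by
  rcases l.eq_or_neBot with rfl | _
  · exact eventually_bot
  obtain ⟨φ, hφ⟩ := hweak.exists_isMatching hLn hL
  obtain ⟨A, R, hN, hNn⟩ := hφ.exists_countingBound hκ.1 hτ
  obtain ⟨ρ, hρ⟩ := hK.isBounded.exists_norm_le
  obtain ⟨ℓ, hℓ, hℓL, herr, hHℓ⟩ := exists_truncation_radius (C := C) (A := A) (γbar := γbar)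
    (ρ := ρ) hL hκθ hτ0 hHL hh (max (max 1 R) (max |x0| (2 * ρ))) (show 0 < ε / 8 by positivity)
  rw [ge_iff_le, max_le_iff, max_le_iff, max_le_iff] at hℓ
  obtain ⟨⟨hℓ1, hℓR⟩, hℓx0, hℓρ⟩ := hℓ
  have hHn := (((hHinf ℓ hℓ1 hℓL.1 hℓL.2).const_mul γbar).sub_const
    (γbar * (HL ℓ + h))).abs.eventually_lt_const hHℓ
  have hx0n : ∀ᶠ n in l, x0 ∉ Ln n :=
    (hweak.eventually_disjoint hLn hL isCompact_singleton
      (Set.disjoint_singleton_left.2 hx0)).mono fun n => Set.disjoint_singleton_left.1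
  have hKℓ : ∀ z ∈ K, ‖z‖ ≤ ℓ := fun z hz => by linarith [hρ z hz, norm_nonneg z]
  filter_upwards [hφ.eventually_chordal_lt hℓL hγlim hγ0 hx0 hK hKℓ
    ((γbar * (HL ℓ + h) : ℝ) : ℂ) hε (show 2 * (ε / 4) < ε by linarith), hNn, hHn, hx0n]
    with n hchordal hNn hHn hx0n z hz
  refine hchordal z hz _ _ (fun hzn => ?_) fun hzL => ?_
  · have htrunc := (hSn n hx0n).norm_sub_simpleFractions_window_sub_le (hH n ℓ hℓ1) (hγn n)
      (hNn.mono hℓR) (hτ n ℓ hℓ1) hκ hθ hκθ hℓ1 hℓx0 hℓρ (hρ z hz) hzn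
    refine (norm_sub_le_norm_sub_add_norm_sub _ ((γbar * H n ℓ : ℝ) : ℂ) _).trans ?_
    rw [← Complex.ofReal_sub, Complex.norm_real, Real.norm_eq_abs]
    linarith
  · have htrunc := hS.norm_sub_simpleFractions_window_sub_le (hHL ℓ hℓ1)
      (RegularSums.of_tendsto hγn hγlim) (hN.mono hℓR)
      (hφ.invPowTailLE (by linarith) fun n => hτ n ℓ hℓ1) hκ hθ hκθ hℓ1 hℓx0 hℓρ (hρ z hz) hzL
    rw [mul_add, Complex.ofReal_add, add_sub_right_comm, add_sub_add_right_eq_sub]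
    linarith

/-- Continuity of the Stieltjes transform with respect to the configuration and the
weights: under the assumptions of the continuity theorem, the Stieltjes transforms
`S_n` of the weighted measures `Λ_n` converge to `S + γ̄h` uniformly on compact sets
for the chordal distance on the Riemann sphere (`∞` at the poles). -/
theorem stieltjes_transform_continuity
    (Ln : ℕ → Set ℝ) (L : Set ℝ)
    (hLnfin : ∀ n, ∀ a b : ℝ, ((Ln n) ∩ Set.Icc a b).Finite)
    (hLfin : ∀ a b : ℝ, (L ∩ Set.Icc a b).Finite)
    (hweak : ∀ f : ℝ → ℝ, Continuous f → HasCompactSupport f →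
      Tendsto (fun n => ∑' x : ↥(Ln n), f (x : ℝ)) atTop (𝓝 (∑' x : ↥L, f (x : ℝ))))
    (α : ℝ) (hα : α ∈ Set.Ioo (0 : ℝ) 1)
    (τ : ℝ → ℝ) (hτpos : ∀ ℓ : ℝ, 1 ≤ ℓ → 0 < τ ℓ)
    (hτ0 : Tendsto τ atTop (𝓝 0))
    (hτ : ∀ n, ∀ ℓ : ℝ, 1 ≤ ℓ →
      (∑' x : ↥{t | t ∈ Ln n ∧ ℓ < |t|}, ENNReal.ofReal (1 / |(x : ℝ)| ^ (1 + α)))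
        ≤ ENNReal.ofReal (τ ℓ))
    (H : ℕ → ℝ → ℝ) (HL : ℝ → ℝ)
    (hH : ∀ n, ∀ ℓ : ℝ, 1 ≤ ℓ →
      Tendsto (fun ℓ' : ℝ =>
          ∑' x : ↥{t | t ∈ Ln n ∧ ℓ < |t| ∧ |t| < ℓ'}, (1 / (x : ℝ)))
        atTop (𝓝 (H n ℓ)))
    (hHL : ∀ ℓ : ℝ, 1 ≤ ℓ →
      Tendsto (fun ℓ' : ℝ =>
          ∑' x : ↥{t | t ∈ L ∧ ℓ < |t| ∧ |t| < ℓ'}, (1 / (x : ℝ)))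
        atTop (𝓝 (HL ℓ)))
    (h : ℝ) (Hinf : ℝ → ℝ)
    (hHinf : ∀ ℓ : ℝ, 1 ≤ ℓ → ℓ ∉ L → -ℓ ∉ L →
      Tendsto (fun n => H n ℓ) atTop (𝓝 (Hinf ℓ)))
    (hh : Tendsto Hinf (atTop ⊓ Filter.principal {ℓ : ℝ | ℓ ∉ L ∧ -ℓ ∉ L}) (𝓝 h))
    (hHL0 : Tendsto HL (atTop ⊓ Filter.principal {ℓ : ℝ | ℓ ∉ L ∧ -ℓ ∉ L}) (𝓝 0))
    (γn : ℕ → ℤ → ℝ) (γ : ℤ → ℝ)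
    (hγnpos : ∀ n k, 0 < γn n k) (hγpos : ∀ k, 0 < γ k)
    (hγlim : ∀ k, Tendsto (fun n => γn n k) atTop (𝓝 (γ k)))
    (γbar c α' : ℝ) (hγbar : 0 < γbar) (hc : 0 < c)
    (hα'pos : 0 < α') (hα' : (1 + α) * α' < 1)
    (hγsum1 : ∀ n, ∀ m : ℕ, 1 ≤ m →
      |(∑ k ∈ Finset.range m, γn n (k : ℤ)) - γbar * (m : ℝ)| ≤ c * (m : ℝ) ^ α')
    (hγsum2 : ∀ n, ∀ m : ℕ, 1 ≤ m →
      |(∑ k ∈ Finset.range m, γn n (-(k : ℤ) - 1)) - γbar * (m : ℝ)| ≤ c * (m : ℝ) ^ α')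
    (x0 : ℝ) (hx0 : x0 ∉ L)
    (Sn : ℕ → ℂ → ℂ) (S : ℂ → ℂ)
    (hSn : ∀ n, x0 ∉ Ln n → ∀ z : ℂ, (∀ x ∈ Ln n, z ≠ (x : ℂ)) →
      Tendsto
        (fun ℓ : ℝ => ∑' x : ↥((Ln n) ∩ Set.Icc (-ℓ) ℓ),
          ((weightFun (Ln n) x0 (γn n) (x : ℝ) : ℝ) : ℂ) / (((x : ℝ) : ℂ) - z))
        atTop (𝓝 (Sn n z)))
    (hS : ∀ z : ℂ, (∀ x ∈ L, z ≠ (x : ℂ)) →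
      Tendsto
        (fun ℓ : ℝ => ∑' x : ↥(L ∩ Set.Icc (-ℓ) ℓ),
          ((weightFun L x0 γ (x : ℝ) : ℝ) : ℂ) / (((x : ℝ) : ℂ) - z))
        atTop (𝓝 (S z))) :
    ∀ K : Set ℂ, IsCompact K → ∀ ε : ℝ, 0 < ε →
      ∃ N : ℕ, ∀ n ≥ N, ∀ z ∈ K,
        chordal
          (if ∃ x ∈ Ln n, z = (x : ℂ) then none else some (Sn n z))
          (if ∃ x ∈ L, z = (x : ℂ) then none
            else some (S z + ((γbar * h : ℝ) : ℂ))) < ε := by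
  intro K hK ε hε
  exact eventually_atTop.1 (stieltjes_transform_continuity_general (C := (2 ^ α' + 1) * c)
    hLnfin hLfin hweak ⟨by linarith [hα.1], by linarith [hα.2]⟩ hα'pos.le hα' hτ0
    (fun n ℓ hℓ => .of_tsum_le (hτpos ℓ hℓ).le (hτ n ℓ hℓ)) hH hHL hHinf hh
    (fun k => (hγpos k).ne') hγlim (fun n => .of_sum_range hα'pos.le (hγsum1 n) (hγsum2 n))
    hx0 hSn hS hK hε)
end
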